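/- arXiv:2311.14495 — 9 statements merged into one kernel-verified Lean document; each statement's English description precedes it below -/
import Mathlib

section
/- Let f(w) = −e^w for w ∈ ℝ. Then for every w ∈ ℝ and every β ≥ 0, sup_{|w̃ − w| ≤ β} ∫₀^∞ |e^{f(w̃) t} − e^{f(w) t}| dt = (e^β − 1)/|f(w)|. Consequently sup_{w ∈ ℝ} [ |f(w)| · sup_{|w̃ − w| ≤ β} ∫₀^∞ |e^{f(w̃) t} − e^{f(w) t}| dt ] ≤ e^β − 1, so the exponential reparameterization f(w) = −e^w is a stable reparameterization with modulus g(β) = e^β − 1. -/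
/-!
Two decaying exponentials `e^{at}` and `e^{bt}` do not cross on `t > 0`, so their `L¹` distance is
the difference `|1/a - 1/b|` of their integrals. For `a = -e^x` and `b = -e^w` this equals
`|e^{w - x} - 1| / |b|`, whose numerator depends only on the displacement `w - x`. Since
`|e^y - 1| ≤ e^{|y|} - 1`, with equality for `y ≥ 0`, the worst displacement of size at most `β`
is `w - x = β`.
-/

open Set

theorem integral_abs_exp_mul_sub_exp_mul_Ioi {a b : ℝ} (ha : a < 0) (hb : b < 0) :
    ∫ t in Ioi (0 : ℝ), |Real.exp (a * t) - Real.exp (b * t)| = |a⁻¹ - b⁻¹| := by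
  wlog hba : b ≤ a generalizing a b
  · simpa only [abs_sub_comm] using this hb ha (le_of_not_ge hba)
  have exp_le : ∀ t ∈ Ioi (0 : ℝ), Real.exp (b * t) ≤ Real.exp (a * t) := fun t ht ↦
    Real.exp_le_exp.2 (mul_le_mul_of_nonneg_right hba (le_of_lt ht))
  have inv_le : a⁻¹ ≤ b⁻¹ := (inv_le_inv_of_neg ha hb).2 hba
  calc ∫ t in Ioi (0 : ℝ), |Real.exp (a * t) - Real.exp (b * t)|
      = ∫ t in Ioi (0 : ℝ), (Real.exp (a * t) - Real.exp (b * t)) :=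
        MeasureTheory.setIntegral_congr_fun measurableSet_Ioi fun t ht ↦
          abs_of_nonneg (sub_nonneg.2 (exp_le t ht))
    _ = b⁻¹ - a⁻¹ := by
        rw [MeasureTheory.integral_sub (integrableOn_exp_mul_Ioi ha 0)
          (integrableOn_exp_mul_Ioi hb 0), integral_exp_mul_Ioi ha, integral_exp_mul_Ioi hb]
        simp only [mul_zero, Real.exp_zero]
        ring
    _ = |a⁻¹ - b⁻¹| := by rw [abs_of_nonpos (sub_nonpos.2 inv_le), neg_sub]

theorem integral_abs_exp_neg_exp_mul_sub_Ioi (x w : ℝ) :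
    ∫ t in Ioi (0 : ℝ), |Real.exp (-Real.exp x * t) - Real.exp (-Real.exp w * t)|
      = |Real.exp (w - x) - 1| / |(-Real.exp w)| := by
  rw [integral_abs_exp_mul_sub_exp_mul_Ioi (neg_lt_zero.2 (Real.exp_pos x))
    (neg_lt_zero.2 (Real.exp_pos w)), ← abs_div, Real.exp_sub]
  congr 1
  field_simp
  ring

theorem norm_cexp_sub_one_le_exp_norm_sub_one (z : ℂ) :
    ‖Complex.exp z - 1‖ ≤ Real.exp ‖z‖ - 1 := by
  simpa using Complex.norm_exp_sub_sum_le_exp_norm_sub_sum z 1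

theorem abs_exp_sub_one_le_exp_abs_sub_one (x : ℝ) :
    |Real.exp x - 1| ≤ Real.exp |x| - 1 := by
  simpa only [← Complex.ofReal_exp, ← Complex.ofReal_one, ← Complex.ofReal_sub, Complex.norm_real,
    Real.norm_eq_abs] using norm_cexp_sub_one_le_exp_norm_sub_one x

theorem isGreatest_range_abs_exp_sub_sub_one {β : ℝ} (hβ : 0 ≤ β) (w : ℝ) :
    IsGreatest (range fun x : {x : ℝ // |x - w| ≤ β} ↦ |Real.exp (w - x) - 1|)
      (Real.exp β - 1) := by
  constructor
  · have mem_ball : |w - β - w| ≤ β := by rw [sub_sub_cancel_left, abs_neg, abs_of_nonneg hβ]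
    refine ⟨⟨w - β, mem_ball⟩, ?_⟩
    simp only [sub_sub_cancel]
    exact abs_of_nonneg (sub_nonneg.2 (Real.one_le_exp hβ))
  · rintro _ ⟨⟨x, hx⟩, rfl⟩
    rw [abs_sub_comm] at hx
    calc |Real.exp (w - x) - 1| ≤ Real.exp |w - x| - 1 := abs_exp_sub_one_le_exp_abs_sub_one _
      _ ≤ Real.exp β - 1 := by gcongr

theorem iSup_integral_abs_exp_neg_exp_mul_sub_Ioi {β : ℝ} (hβ : 0 ≤ β) (w : ℝ) :
    (⨆ x : {x : ℝ // |x - w| ≤ β},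
        ∫ t in Ioi (0 : ℝ), |Real.exp (-Real.exp (x : ℝ) * t) - Real.exp (-Real.exp w * t)|)
      = (Real.exp β - 1) / |(-Real.exp w)| := by
  simp_rw [integral_abs_exp_neg_exp_mul_sub_Ioi, div_eq_mul_inv]
  rw [← Real.iSup_mul_of_nonneg (inv_nonneg.2 (abs_nonneg _))]
  exact congrArg (· * _) (isGreatest_range_abs_exp_sub_sub_one hβ w).csSup_eq

/-- The exponential reparameterization `f(w) = -e^w` is stable: for every `w` and `β ≥ 0`,
`sup_{|w' − w| ≤ β} ∫₀^∞ |e^{f(w') t} − e^{f(w) t}| dt = (e^β − 1)/|f(w)|`, and consequently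
`|f(w)| ⬝ sup_{|w' − w| ≤ β} ∫₀^∞ |e^{f(w') t} − e^{f(w) t}| dt ≤ e^β − 1` for all `w`,
so `g(β) = e^β − 1` is a stability modulus. -/
theorem stmt5 (β : ℝ) (hβ : 0 ≤ β) :
    (∀ w : ℝ,
      (⨆ wt : {x : ℝ // |x - w| ≤ β},
          ∫ t in Ioi (0:ℝ),
            |Real.exp (-Real.exp (wt : ℝ) * t) - Real.exp (-Real.exp w * t)|)
        = (Real.exp β - 1) / |(-Real.exp w)|) ∧
    (∀ w : ℝ,
      |(-Real.exp w)| *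
        (⨆ wt : {x : ℝ // |x - w| ≤ β},
          ∫ t in Ioi (0:ℝ),
            |Real.exp (-Real.exp (wt : ℝ) * t) - Real.exp (-Real.exp w * t)|)
        ≤ Real.exp β - 1) := by
  refine ⟨iSup_integral_abs_exp_neg_exp_mul_sub_Ioi hβ, fun w ↦ ?_⟩
  have abs_ne : |(-Real.exp w)| ≠ 0 := abs_ne_zero.2 (neg_ne_zero.2 (Real.exp_ne_zero w))
  rw [iSup_integral_abs_exp_neg_exp_mul_sub_Ioi hβ, mul_div_cancel₀ _ abs_ne]
end

section
/- For all real numbers w, w̃ and β ≥ 0 with |w̃ − w| ≤ β, the softplus function satisfies the two-sided bound e^{−β} · log(1 + e^w) ≤ log(1 + e^{w̃}) ≤ e^{β} · log(1 + e^w). -/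
/-!
Taking logarithms in Bernoulli's inequality `1 + c * x ≤ (1 + x) ^ c` with `c = e ^ t` and
`x = e ^ w` shows that a shift of the argument by `t ≥ 0` multiplies softplus by at most `e ^ t`.
As softplus is increasing, the upper bound follows; the lower bound is the upper bound with the two
points exchanged.
-/

theorem log_one_add_mul_le_mul_log_one_add {c x : ℝ} (hc : 1 ≤ c) (hx : 0 < 1 + c * x) :
    Real.log (1 + c * x) ≤ c * Real.log (1 + x) := by
  have one_add_pos : 0 < 1 + x := by nlinarith
  have bernoulli : 1 + c * x ≤ (1 + x) ^ c :=
    one_add_mul_self_le_rpow_one_add (by linarith) hc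
  calc Real.log (1 + c * x) ≤ Real.log ((1 + x) ^ c) := Real.log_le_log hx bernoulli
    _ = c * Real.log (1 + x) := Real.log_rpow one_add_pos c

/-- The softplus function `w ↦ log (1 + e ^ w)`, a smooth positive approximation of `max w 0`. -/
noncomputable def softplus (w : ℝ) : ℝ := Real.log (1 + Real.exp w)

theorem softplus_monotone : Monotone softplus := fun _ _ h ↦
  Real.log_le_log (by positivity) (by gcongr)

theorem softplus_add_le_exp_mul (w : ℝ) {t : ℝ} (ht : 0 ≤ t) :
    softplus (w + t) ≤ Real.exp t * softplus w := by
  calc softplus (w + t) = Real.log (1 + Real.exp t * Real.exp w) := by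
        rw [softplus, add_comm w, Real.exp_add]
    _ ≤ Real.exp t * softplus w :=
        log_one_add_mul_le_mul_log_one_add (Real.one_le_exp ht) (by positivity)

theorem softplus_le_exp_mul_of_le_add {v w t : ℝ} (ht : 0 ≤ t) (h : v ≤ w + t) :
    softplus v ≤ Real.exp t * softplus w :=
  (softplus_monotone h).trans (softplus_add_le_exp_mul w ht)

/-- Two-sided bound for the softplus function: if `|w' − w| ≤ β` with `β ≥ 0`, then
`e^{−β} log(1 + e^w) ≤ log(1 + e^{w'}) ≤ e^{β} log(1 + e^w)`. -/
theorem stmt6 (w wt β : ℝ) (hβ : 0 ≤ β) (h : |wt - w| ≤ β) :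
    Real.exp (-β) * Real.log (1 + Real.exp w) ≤ Real.log (1 + Real.exp wt) ∧
    Real.log (1 + Real.exp wt) ≤ Real.exp β * Real.log (1 + Real.exp w) := by
  change Real.exp (-β) * softplus w ≤ softplus wt ∧ softplus wt ≤ Real.exp β * softplus w
  obtain ⟨wt_sub_w_le, w_sub_wt_le⟩ := abs_sub_le_iff.mp h
  constructor
  · rw [Real.exp_neg, inv_mul_le_iff₀ (Real.exp_pos β)]
    exact softplus_le_exp_mul_of_le_add hβ (sub_le_iff_le_add'.mp w_sub_wt_le)
  · exact softplus_le_exp_mul_of_le_add hβ (sub_le_iff_le_add'.mp wt_sub_w_le)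
end

section
/- Let a > 0, b > 0 and f(w) = −1/(a w² + b) for w ∈ ℝ. Then for every w ∈ ℝ and every β ≥ 0, |f(w)| · sup_{|w̃ − w| ≤ β} ∫₀^∞ |e^{f(w̃) t} − e^{f(w) t}| dt ≤ a β²/b + β √(a/b). In particular, since β ↦ a β²/b + β √(a/b) is continuous and vanishes at 0, f is a stable reparameterization. -/
open Set

/-!
Integrating, `∫₀^∞ |e^{x t} - e^{y t}| dt = |1/x - 1/y|` for `x, y < 0`. With `f = -1/g` and
`g(w) = a w² + b`, the quantity to be bounded is therefore the relative variation
`|g(w') - g(w)| / g(w)`. Its numerator is at most `a β² + β |g'(w)|`; the first term is divided by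
`g(w) ≥ b`, and the second is controlled by `|g'| / g ≤ √(a/b)`, which is AM-GM for `a w²` and `b`.
-/

theorem integral_Ioi_abs_exp_mul_sub_exp_mul {x y : ℝ} (hx : x < 0) (hy : y < 0) :
    ∫ t in Ioi (0 : ℝ), |Real.exp (x * t) - Real.exp (y * t)| = |x⁻¹ - y⁻¹| := by
  wlog hyx : y ≤ x generalizing x y
  · simp_rw [abs_sub_comm (Real.exp (x * _)), abs_sub_comm x⁻¹]
    exact this hy hx (le_of_not_ge hyx)
  have exp_le : ∀ t ∈ Ioi (0 : ℝ), Real.exp (y * t) ≤ Real.exp (x * t) := fun t ht ↦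
    Real.exp_le_exp.2 (mul_le_mul_of_nonneg_right hyx (mem_Ioi.1 ht).le)
  have inv_le : x⁻¹ ≤ y⁻¹ := (inv_le_inv_of_neg hx hy).2 hyx
  calc ∫ t in Ioi (0 : ℝ), |Real.exp (x * t) - Real.exp (y * t)|
      = ∫ t in Ioi (0 : ℝ), (Real.exp (x * t) - Real.exp (y * t)) :=
        MeasureTheory.setIntegral_congr_fun measurableSet_Ioi fun t ht ↦
          abs_of_nonneg (sub_nonneg.2 (exp_le t ht))
    _ = (∫ t in Ioi (0 : ℝ), Real.exp (x * t)) - ∫ t in Ioi (0 : ℝ), Real.exp (y * t) :=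
        MeasureTheory.integral_sub (integrableOn_exp_mul_Ioi hx 0) (integrableOn_exp_mul_Ioi hy 0)
    _ = y⁻¹ - x⁻¹ := by
        rw [integral_exp_mul_Ioi hx, integral_exp_mul_Ioi hy]
        simp only [mul_zero, Real.exp_zero, neg_div, one_div]
        ring
    _ = |x⁻¹ - y⁻¹| := by rw [abs_sub_comm, abs_of_nonneg (sub_nonneg.2 inv_le)]

theorem abs_neg_one_div_mul_integral_Ioi_abs_exp_sub_exp {p q : ℝ} (hp : 0 < p) (hq : 0 < q) :
    |(-(1 / p))| * ∫ t in Ioi (0 : ℝ), |Real.exp (-(1 / q) * t) - Real.exp (-(1 / p) * t)| =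
      |q - p| / p := by
  have integral_eq := integral_Ioi_abs_exp_mul_sub_exp_mul
    (neg_neg_of_pos (one_div_pos.2 hq)) (neg_neg_of_pos (one_div_pos.2 hp))
  have inv_sub_inv : (-(1 / q))⁻¹ - (-(1 / p))⁻¹ = p - q := by
    simp only [one_div, inv_neg, inv_inv]
    ring
  rw [integral_eq, inv_sub_inv, abs_neg, abs_of_pos (one_div_pos.2 hp), one_div_mul_eq_div,
    abs_sub_comm]

theorem abs_sq_sub_sq_le_of_abs_sub_le {R : Type*} [CommRing R] [LinearOrder R]
    [IsStrictOrderedRing R] {x w β : R} (hx : |x - w| ≤ β) :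
    |x ^ 2 - w ^ 2| ≤ β ^ 2 + β * (2 * |w|) :=
  calc |x ^ 2 - w ^ 2| = |(x - w) ^ 2 + (x - w) * (2 * w)| := by ring_nf
    _ ≤ |x - w| ^ 2 + |x - w| * (2 * |w|) := by
        refine (abs_add_le _ _).trans_eq ?_
        rw [abs_mul, abs_mul, abs_pow, abs_two]
    _ ≤ β ^ 2 + β * (2 * |w|) := by gcongr

theorem two_mul_abs_div_mul_sq_add_le_sqrt {a b : ℝ} (ha : 0 ≤ a) (hb : 0 < b) (w : ℝ) :
    2 * a * |w| / (a * w ^ 2 + b) ≤ √(a / b) := by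
  have amgm : 2 * (√(a / b) * |w|) ≤ a / b * w ^ 2 + 1 := by
    simpa only [mul_one, mul_assoc, mul_pow, Real.sq_sqrt (div_nonneg ha hb.le), sq_abs, one_pow]
      using two_mul_le_add_sq (√(a / b) * |w|) 1
  rw [div_le_iff₀ (by positivity)]
  calc 2 * a * |w| = √(a / b) * b * (2 * (√(a / b) * |w|)) := by
        have sqrt_mul_sqrt_mul : √(a / b) * √(a / b) * b = a := by
          rw [Real.mul_self_sqrt (div_nonneg ha hb.le), div_mul_cancel₀ a hb.ne']
        linear_combination -2 * |w| * sqrt_mul_sqrt_mul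
    _ ≤ √(a / b) * b * (a / b * w ^ 2 + 1) := by gcongr
    _ = √(a / b) * (a * w ^ 2 + b) := by field_simp

theorem abs_mul_sq_add_sub_div_le {a b x w β : ℝ} (ha : 0 ≤ a) (hb : 0 < b)
    (hx : |x - w| ≤ β) :
    |(a * x ^ 2 + b) - (a * w ^ 2 + b)| / (a * w ^ 2 + b) ≤ a * β ^ 2 / b + β * √(a / b) := by
  have hβ : 0 ≤ β := (abs_nonneg _).trans hx
  have le_denom : b ≤ a * w ^ 2 + b := le_add_of_nonneg_left (by positivity)
  calc |(a * x ^ 2 + b) - (a * w ^ 2 + b)| / (a * w ^ 2 + b)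
      = a * |x ^ 2 - w ^ 2| / (a * w ^ 2 + b) := by
        rw [add_sub_add_right_eq_sub, ← mul_sub, abs_mul, abs_of_nonneg ha]
    _ ≤ a * (β ^ 2 + β * (2 * |w|)) / (a * w ^ 2 + b) := by
        gcongr
        exact abs_sq_sub_sq_le_of_abs_sub_le hx
    _ = a * β ^ 2 / (a * w ^ 2 + b) + β * (2 * a * |w| / (a * w ^ 2 + b)) := by ring
    _ ≤ a * β ^ 2 / b + β * √(a / b) := by
        gcongr
        exact two_mul_abs_div_mul_sq_add_le_sqrt ha hb w

/-- The "best" reparameterization `f(w) = −1/(a w² + b)` (with `a, b > 0`) is stable: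
for every `w` and `β ≥ 0`,
`|f(w)| ⬝ sup_{|w' − w| ≤ β} ∫₀^∞ |e^{f(w') t} − e^{f(w) t}| dt ≤ a β²/b + β √(a/b)`,
a continuous modulus vanishing at `0`. -/
theorem stmt8 (a b : ℝ) (ha : 0 < a) (hb : 0 < b) (β : ℝ) (hβ : 0 ≤ β) (w : ℝ) :
    |(-(1 / (a * w ^ 2 + b)))| *
      (⨆ wt : {x : ℝ // |x - w| ≤ β},
        ∫ t in Ioi (0:ℝ),
          |Real.exp (-(1 / (a * (wt : ℝ) ^ 2 + b)) * t) -
            Real.exp (-(1 / (a * w ^ 2 + b)) * t)|)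
      ≤ a * β ^ 2 / b + β * Real.sqrt (a / b) := by
  rw [Real.mul_iSup_of_nonneg (abs_nonneg _)]
  refine Real.iSup_le (fun ⟨x, hx⟩ ↦ ?_) (by positivity)
  rw [abs_neg_one_div_mul_integral_Ioi_abs_exp_sub_exp (by positivity) (by positivity)]
  exact abs_mul_sq_add_sub_div_le ha.le hb hx
end

section
/- Let ρ : [0, ∞) → ℝ be Lebesgue integrable and let f : ℝ → ℝ with f(w) < 0 for all w be a stable reparameterization with modulus g. For each m let c^{(m)}, w^{(m)} ∈ ℝ^m and define the perturbation error E_m(β) := sup_{|w̃ − w^{(m)}|₂ ≤ β} ∫₀^∞ | Σ_{i=1}^m c_i^{(m)} e^{f(w̃_i) t} − ρ(t) | dt. Assume (i) the unperturbed models approximate ρ: lim_{m→∞} E_m(0) = 0, and (ii) the models are uniformly absolutely integrable: C := sup_m Σ_{i=1}^m |c_i^{(m)}| / |f(w_i^{(m)})| < ∞. Then the asymptotic perturbation error E(β) := limsup_{m→∞} E_m(β) satisfies E(β) ≤ C · g(β) for all β ≥ 0; in particular E(0) = 0 and lim_{β→0⁺} E(β) = 0, i.e. the approximation is a stable approximation.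 -/
open Set Filter MeasureTheory

/- Write `M v = ∑ i, c i • φ (v i)` for the model with weights `v`. By the triangle inequality
`‖M v - ρ‖ ≤ ‖M w - ρ‖ + ∑ i, ‖c i‖ * ‖φ (v i) - φ (w i)‖`, and stability of `φ` bounds the `i`-th
summand by `‖c i‖ / a (w i) * g β`; summing up and letting the model size grow leaves `C * g β`.
The linear RNN is the case where `φ v` is the kernel `t ↦ exp (f v * t)` in `L¹(0, ∞)` and
`a v = |f v|`. -/

open WithLp Topology
open scoped ENNReal

theorem limsup_mem_Icc_of_tendsto {α β : Type*} [ConditionallyCompleteLinearOrder β]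
    [TopologicalSpace β] [OrderTopology β] {l : Filter α} [l.NeBot] {u e : α → β} {b d : β}
    (he : Tendsto e l (𝓝 b)) (hdu : ∀ᶠ k in l, d ≤ u k) (hue : ∀ᶠ k in l, u k ≤ e k) :
    limsup u l ∈ Icc d b := by
  have hle : IsBoundedUnder (· ≤ ·) l u := he.isBoundedUnder_le.mono_le hue
  have hge : IsBoundedUnder (· ≥ ·) l u := isBoundedUnder_of_eventually_ge hdu
  refine ⟨le_limsup_of_frequently_le hdu.frequently hle, ?_⟩
  rw [← he.limsup_eq]
  exact limsup_le_limsup hue hge.isCoboundedUnder_le he.isBoundedUnder_le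

theorem dist_toLp_update_self {ι X : Type*} [Fintype ι] [DecidableEq ι] [PseudoMetricSpace X]
    (p : ℝ≥0∞) [Fact (1 ≤ p)] (w : ι → X) (i : ι) (y : X) :
    dist (toLp p (Function.update w i y)) (toLp p w) = dist y (w i) := by
  have hcoord (j : ι) (hj : j ≠ i) : dist (Function.update w i y j) (w j) = 0 := by
    rw [Function.update_of_ne hj, dist_self]
  have hge : dist y (w i) ≤ dist (toLp p (Function.update w i y)) (toLp p w) := by
    simpa using PiLp.dist_apply_le (toLp p (Function.update w i y)) (toLp p w) i
  refine le_antisymm ?_ hge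
  rcases eq_or_ne p ∞ with rfl | hp
  · have : Nonempty ι := ⟨i⟩
    rw [PiLp.dist_eq_iSup]
    refine ciSup_le fun j => ?_
    rcases eq_or_ne j i with rfl | hj
    · simp
    · exact (hcoord j hj).trans_le dist_nonneg
  · have hp0 : 0 < p.toReal := ENNReal.toReal_pos (zero_lt_one.trans_le Fact.out).ne' hp
    rw [PiLp.dist_eq_sum hp0, Finset.sum_eq_single i]
    · simp [← Real.rpow_mul, hp0.ne']
    · intro j _ hj
      simp [hcoord j hj, hp0.ne']
    · simp

/-- A family `φ` is stable with weight `a` and modulus `g` if moving the parameter `x` by at most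
`β` changes `φ x` by at most `g β / a x`. For `φ v` the kernel `t ↦ exp (f v * t)` in `L¹(0, ∞)` and
`a v = |f v|` this says that `f` is a stable reparameterization. As the supremum is real-valued, it
is `0` when the displacements are unbounded, and the condition at `x` then reads `0 ≤ g β`. -/
def IsStableFamily {X V : Type*} [PseudoMetricSpace X] [SeminormedAddCommGroup V] (φ : X → V)
    (a : X → ℝ) (g : ℝ → ℝ) : Prop :=
  ∀ β ≥ 0, ∀ x, a x * (⨆ y : {y // dist y x ≤ β}, ‖φ y - φ x‖) ≤ g β

/-- The worst error in approximating `ρ` by `∑ i, c i • φ (v i)` when the weights `v` range over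
the `ℓᵖ` ball of radius `β` around `w`. The supremum is real-valued, hence `0` when the errors are
unbounded. -/
noncomputable def perturbationError {ι X 𝕜 V : Type*} [Fintype ι] [PseudoMetricSpace X]
    [SeminormedAddCommGroup V] [SMul 𝕜 V] (p : ℝ≥0∞) [Fact (1 ≤ p)] (φ : X → V) (c : ι → 𝕜)
    (w : ι → X) (ρ : V) (β : ℝ) : ℝ :=
  ⨆ v : {v : ι → X // dist (toLp p v) (toLp p w) ≤ β}, ‖∑ i, c i • φ (v.1 i) - ρ‖

section Stability

variable {X V : Type*} [PseudoMetricSpace X] [SeminormedAddCommGroup V] {φ : X → V} {a : X → ℝ}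
  {g : ℝ → ℝ} {β : ℝ}

theorem IsStableFamily.modulus_nonneg [Nonempty X] (hφ : IsStableFamily φ a g) (ha : ∀ x, 0 ≤ a x)
    (hβ : 0 ≤ β) : 0 ≤ g β :=
  (mul_nonneg (ha _) (Real.iSup_nonneg fun _ => norm_nonneg _)).trans
    (hφ β hβ (Classical.arbitrary X))

theorem IsStableFamily.norm_sub_le (hφ : IsStableFamily φ a g) {x y : X} (hx : 0 < a x)
    (hbdd : BddAbove (range fun y : {y // dist y x ≤ β} => ‖φ y - φ x‖)) (hy : dist y x ≤ β) :
    ‖φ y - φ x‖ ≤ g β / a x := by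
  rw [le_div_iff₀' hx]
  exact (mul_le_mul_of_nonneg_left (le_ciSup hbdd ⟨y, hy⟩) hx.le).trans
    (hφ β (dist_nonneg.trans hy) x)

end Stability

section PerturbationError

variable {ι 𝕜 V : Type*} [Fintype ι] [NormedField 𝕜] [SeminormedAddCommGroup V] [NormedSpace 𝕜 V]
  {p : ℝ≥0∞} [Fact (1 ≤ p)]

theorem norm_sum_smul_sub_le {X : Type*} (φ : X → V) (c : ι → 𝕜) (v w : ι → X) (ρ : V) :
    ‖∑ i, c i • φ (v i) - ρ‖ ≤
      ‖∑ i, c i • φ (w i) - ρ‖ + ∑ i, ‖c i‖ * ‖φ (v i) - φ (w i)‖ := by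
  have hsplit : ∑ i, c i • φ (v i) - ρ =
      (∑ i, c i • φ (w i) - ρ) + ∑ i, c i • (φ (v i) - φ (w i)) := by
    simp only [smul_sub, Finset.sum_sub_distrib]
    abel
  rw [hsplit]
  refine (norm_add_le _ _).trans (add_le_add_right (norm_sum_le_of_le _ fun i _ => ?_) _)
  exact (norm_smul _ _).le

theorem sum_smul_update_sub [DecidableEq ι] {X : Type*} (φ : X → V) (c : ι → 𝕜) (w : ι → X) (i : ι)
    (y : X) :
    ∑ j, c j • φ (Function.update w i y j) - ∑ j, c j • φ (w j) = c i • (φ y - φ (w i)) := by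
  rw [← Finset.sum_sub_distrib, Finset.sum_eq_single i]
  · rw [Function.update_self, smul_sub]
  · intro j _ hj
    rw [Function.update_of_ne hj, sub_self]
  · simp

section PseudoMetricSpace

variable {X : Type*} [PseudoMetricSpace X] {φ : X → V} {a : X → ℝ} {g : ℝ → ℝ} {c : ι → 𝕜}
  {w : ι → X} {ρ : V} {β : ℝ}

theorem perturbationError_nonneg : 0 ≤ perturbationError p φ c w ρ β :=
  Real.iSup_nonneg fun _ => norm_nonneg _

-- Perturbing only the `i`-th weight isolates `c i • (φ y - φ (w i))` as a difference of two errors.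
theorem bddAbove_norm_sub_of_bddAbove_error
    (hbdd : BddAbove (range fun v : {v : ι → X // dist (toLp p v) (toLp p w) ≤ β} =>
      ‖∑ i, c i • φ (v.1 i) - ρ‖)) {i : ι} (hi : c i ≠ 0) :
    BddAbove (range fun y : {y // dist y (w i) ≤ β} => ‖φ y - φ (w i)‖) := by
  classical
  obtain ⟨K, hK⟩ := hbdd
  refine ⟨(K + ‖∑ j, c j • φ (w j) - ρ‖) / ‖c i‖, ?_⟩
  rintro _ ⟨⟨y, hy⟩, rfl⟩
  have herror : ‖∑ j, c j • φ (Function.update w i y j) - ρ‖ ≤ K :=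
    hK ⟨⟨Function.update w i y, (dist_toLp_update_self p w i y).trans_le hy⟩, rfl⟩
  rw [le_div_iff₀' (norm_pos_iff.mpr hi), ← norm_smul, ← sum_smul_update_sub,
    ← sub_sub_sub_cancel_right _ _ ρ]
  exact (norm_sub_le _ _).trans (add_le_add_left herror _)

theorem perturbationError_le [Nonempty X] (ha : ∀ x, 0 < a x) (hφ : IsStableFamily φ a g)
    (hβ : 0 ≤ β) :
    perturbationError p φ c w ρ β ≤
      ‖∑ i, c i • φ (w i) - ρ‖ + (∑ i, ‖c i‖ / a (w i)) * g β := by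
  by_cases hbdd : BddAbove (range fun v : {v : ι → X // dist (toLp p v) (toLp p w) ≤ β} =>
      ‖∑ i, c i • φ (v.1 i) - ρ‖)
  · have : Nonempty {v : ι → X // dist (toLp p v) (toLp p w) ≤ β} := ⟨w, by simpa using hβ⟩
    refine ciSup_le fun ⟨v, hv⟩ => (norm_sum_smul_sub_le φ c v w ρ).trans ?_
    rw [Finset.sum_mul]
    refine add_le_add_right (Finset.sum_le_sum fun i _ => ?_) _
    rcases eq_or_ne (c i) 0 with hi | hi
    · simp [hi]
    · have hvi : dist (v i) (w i) ≤ β := (PiLp.dist_apply_le (toLp p v) (toLp p w) i).trans hv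
      rw [div_mul_eq_mul_div, mul_div_assoc]
      gcongr
      exact hφ.norm_sub_le (ha _) (bddAbove_norm_sub_of_bddAbove_error hbdd hi) hvi
  · rw [perturbationError, Real.iSup_of_not_bddAbove hbdd]
    have hg : 0 ≤ g β := hφ.modulus_nonneg (fun x => (ha x).le) hβ
    have hsum : 0 ≤ ∑ i, ‖c i‖ / a (w i) :=
      Finset.sum_nonneg fun i _ => div_nonneg (norm_nonneg _) (ha _).le
    positivity

end PseudoMetricSpace

theorem perturbationError_zero {X : Type*} [MetricSpace X] (φ : X → V) (c : ι → 𝕜) (w : ι → X)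
    (ρ : V) : perturbationError p φ c w ρ 0 = ‖∑ i, c i • φ (w i) - ρ‖ := by
  have hball (v : {v : ι → X // dist (toLp p v) (toLp p w) ≤ 0}) : v.1 = w :=
    toLp_injective p (dist_le_zero.mp v.2)
  have : Nonempty {v : ι → X // dist (toLp p v) (toLp p w) ≤ 0} := ⟨w, (dist_self _).le⟩
  simp only [perturbationError, hball, ciSup_const]

theorem perturbationError_two (φ : ℝ → V) (c : ι → 𝕜) (w : ι → ℝ) (ρ : V) (β : ℝ) :
    perturbationError 2 φ c w ρ β =
      ⨆ v : {v : ι → ℝ // √(∑ i, (v i - w i) ^ 2) ≤ β}, ‖∑ i, c i • φ (v.1 i) - ρ‖ := by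
  have hball (v : ι → ℝ) :
      dist (toLp 2 v) (toLp 2 w) ≤ β ↔ √(∑ i, (v i - w i) ^ 2) ≤ β := by
    simp only [PiLp.dist_eq_of_L2, Real.dist_eq, sq_abs]
  exact (Equiv.subtypeEquivRight hball).iSup_congr fun _ => rfl

end PerturbationError

theorem stmt11_general {X 𝕜 V α : Type*} [MetricSpace X] [Nonempty X] [NormedField 𝕜]
    [SeminormedAddCommGroup V] [NormedSpace 𝕜 V] {p : ℝ≥0∞} [Fact (1 ≤ p)] {l : Filter α} [l.NeBot]
    {ι : α → Type*} [∀ k, Fintype (ι k)] {φ : X → V} {a : X → ℝ} {g : ℝ → ℝ} (ha : ∀ x, 0 < a x)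
    (hφ : IsStableFamily φ a g) (hg : Tendsto g (𝓝[>] 0) (𝓝 0)) {c : ∀ k, ι k → 𝕜}
    {w : ∀ k, ι k → X} {ρ : V}
    (happrox : Tendsto (fun k => perturbationError p φ (c k) (w k) ρ 0) l (𝓝 0)) {C : ℝ}
    (hC : ∀ k, ∑ i, ‖c k i‖ / a (w k i) ≤ C) :
    (∀ β ≥ 0, limsup (fun k => perturbationError p φ (c k) (w k) ρ β) l ≤ C * g β) ∧
    limsup (fun k => perturbationError p φ (c k) (w k) ρ 0) l = 0 ∧
    Tendsto (fun β => limsup (fun k => perturbationError p φ (c k) (w k) ρ β) l)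
      (𝓝[>] 0) (𝓝 0) := by
  have herror (β : ℝ) (hβ : 0 ≤ β) (k : α) : perturbationError p φ (c k) (w k) ρ β ≤
      perturbationError p φ (c k) (w k) ρ 0 + C * g β := by
    rw [perturbationError_zero]
    exact (perturbationError_le ha hφ hβ).trans (add_le_add_right
      (mul_le_mul_of_nonneg_right (hC k) (hφ.modulus_nonneg (fun x => (ha x).le) hβ)) _)
  have hlimsup (β : ℝ) (hβ : 0 ≤ β) :
      limsup (fun k => perturbationError p φ (c k) (w k) ρ β) l ∈ Icc 0 (C * g β) :=
    limsup_mem_Icc_of_tendsto (by simpa using happrox.add_const (C * g β))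
      (.of_forall fun _ => perturbationError_nonneg) (.of_forall (herror β hβ))
  refine ⟨fun β hβ => (hlimsup β hβ).2, happrox.limsup_eq, ?_⟩
  refine squeeze_zero' ?_ ?_ (by simpa using hg.const_mul C)
  · filter_upwards [self_mem_nhdsWithin] with β hβ using (hlimsup β (le_of_lt hβ)).1
  · filter_upwards [self_mem_nhdsWithin] with β hβ using (hlimsup β (le_of_lt hβ)).2

theorem norm_sum_smul_toL1_sub_toL1 {Ω ι 𝕜 F : Type*} [MeasurableSpace Ω] {μ : Measure Ω}
    [Fintype ι] [NormedField 𝕜] [NormedAddCommGroup F] [NormedSpace 𝕜 F] (c : ι → 𝕜)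
    {k : ι → Ω → F} (hk : ∀ i, Integrable (k i) μ) {ρ : Ω → F} (hρ : Integrable ρ μ) :
    ‖∑ i, c i • (hk i).toL1 (k i) - hρ.toL1 ρ‖ = ∫ t, ‖∑ i, c i • k i t - ρ t‖ ∂μ := by
  rw [L1.norm_eq_integral_norm]
  refine integral_congr_ae ?_
  filter_upwards [Lp.coeFn_sub (∑ i, c i • (hk i).toL1 (k i)) (hρ.toL1 ρ),
    Lp.coeFn_finsetSum Finset.univ fun i => c i • (hk i).toL1 (k i),
    ae_all_iff.mpr fun i => Lp.coeFn_smul (c i) ((hk i).toL1 (k i)),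
    ae_all_iff.mpr fun i => (hk i).coeFn_toL1, hρ.coeFn_toL1] with t hsub hsum hsmul hkt hρt
  rw [hsub, Pi.sub_apply, hsum, Finset.sum_apply, hρt]
  simp only [hsmul, Pi.smul_apply, hkt]

/-- The kernel `t ↦ exp (a * t)` of a stable scalar linear RNN with eigenvalue `a < 0`, as an
element of `L¹(0, ∞)`. -/
noncomputable def expKernel (a : Iio (0 : ℝ)) : ℝ →₁[volume.restrict (Ioi 0)] ℝ :=
  Integrable.toL1 (fun t => Real.exp (a * t)) (integrableOn_exp_mul_Ioi a.2 0).integrable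

theorem norm_expKernel_sub (a b : Iio (0 : ℝ)) :
    ‖expKernel a - expKernel b‖ = ∫ t in Ioi (0 : ℝ), |Real.exp (a * t) - Real.exp (b * t)| := by
  rw [expKernel, expKernel, ← Integrable.toL1_sub, L1.norm_of_fun_eq_integral_norm]
  rfl

theorem norm_sum_smul_expKernel_sub_toL1 {ι : Type*} [Fintype ι] (c : ι → ℝ) (a : ι → Iio (0 : ℝ))
    {ρ : ℝ → ℝ} (hρ : Integrable ρ (volume.restrict (Ioi 0))) :
    ‖∑ i, c i • expKernel (a i) - hρ.toL1 ρ‖ =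
      ∫ t in Ioi (0 : ℝ), |∑ i, c i * Real.exp (a i * t) - ρ t| :=
  norm_sum_smul_toL1_sub_toL1 c (fun i => (integrableOn_exp_mul_Ioi (a i).2 0).integrable) hρ

/-- Stable approximation of linear functionals via stable reparameterization: if the
unperturbed linear-RNN kernels approximate the integrable memory function `ρ` in `L¹` and the
models are uniformly absolutely integrable (`Σᵢ |cᵢ|/|f(wᵢ)| ≤ C`), then the asymptotic
perturbation error satisfies `E(β) ≤ C g(β)`; in particular `E(0) = 0` and
`E(β) → 0` as `β → 0⁺`, i.e. the approximation is stable. -/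
theorem stmt11 (ρ : ℝ → ℝ) (hρ : IntegrableOn ρ (Ioi 0))
    (f g : ℝ → ℝ) (hf : ∀ v, f v < 0)
    (hg : ContinuousOn g (Ici 0)) (hg0 : g 0 = 0)
    (hstab : ∀ β ≥ (0:ℝ), ∀ v : ℝ,
      |f v| * (⨆ vt : {x : ℝ // |x - v| ≤ β},
        ∫ t in Ioi (0:ℝ), |Real.exp (f (vt : ℝ) * t) - Real.exp (f v * t)|) ≤ g β)
    (c w : (m : ℕ) → Fin m → ℝ)
    (E : ℕ → ℝ → ℝ)
    (hE : ∀ m β, E m β =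
      ⨆ wt : {v : Fin m → ℝ // Real.sqrt (∑ i, (v i - w m i) ^ 2) ≤ β},
        ∫ t in Ioi (0:ℝ), |∑ i, c m i * Real.exp (f ((wt : Fin m → ℝ) i) * t) - ρ t|)
    (happrox : Tendsto (fun m => E m 0) atTop (nhds 0))
    (C : ℝ) (hC : ∀ m, ∑ i, |c m i| / |f (w m i)| ≤ C) :
    (∀ β ≥ (0:ℝ), Filter.limsup (fun m => E m β) atTop ≤ C * g β) ∧
    Filter.limsup (fun m => E m 0) atTop = 0 ∧
    Tendsto (fun β => Filter.limsup (fun m => E m β) atTop)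
      (nhdsWithin 0 (Ioi 0)) (nhds 0) := by
  have hφ : IsStableFamily (fun v => expKernel ⟨f v, hf v⟩) (fun v => |f v|) g := fun β hβ v => by
    simp only [norm_expKernel_sub]
    exact hstab β hβ v
  have hg' : Tendsto g (𝓝[>] 0) (𝓝 0) := by
    simpa only [hg0] using ((hg 0 self_mem_Ici).mono Ioi_subset_Ici_self).tendsto
  obtain rfl : E = fun m => perturbationError 2 (fun v => expKernel ⟨f v, hf v⟩) (c m) (w m)
      (hρ.integrable.toL1 ρ) := by
    ext m β
    simp only [hE, perturbationError_two, norm_sum_smul_expKernel_sub_toL1]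
  exact stmt11_general (fun v => abs_pos.mpr (hf v).ne) hφ hg' happrox hC
end

section
/- (Continuous-time gradient bound.) Let ρ : [0, ∞) → ℝ be Lebesgue integrable, let m ≥ 1, c ∈ ℝ^m, and let f : ℝ → ℝ be differentiable with f(v) > 0 for all v. Define Loss(w) := ∫₀^∞ | ρ(s) − Σ_{i=1}^m c_i e^{−f(w_i) s} | ds for w ∈ ℝ^m. Fix j and a point w at which the partial derivative ∂Loss/∂w_j exists. Then |∂Loss/∂w_j (w)| ≤ |c_j| · |f'(w_j)| / f(w_j)². -/
open Set MeasureTheory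

/-!
The `L¹` distance between `e^{-as}` and `e^{-bs}` on `(0, ∞)` is `|1/a - 1/b|`, since their
difference has constant sign. By the triangle inequality the loss is therefore Lipschitz in the
timescales `1 / f(w_i)` of the modes, with constants `|c_i|`, and the bound is
`|c_j| |(1/f)'(w_j)|`.
-/

open Filter Topology

section Derivative

variable {𝕜 E F : Type*} [NontriviallyNormedField 𝕜] [NormedAddCommGroup E] [NormedSpace 𝕜 E]
  [NormedAddCommGroup F] [NormedSpace 𝕜 F]

theorem norm_hasDerivAt_le_of_norm_sub_le {u : 𝕜 → E} {v : 𝕜 → F} {u' : E} {v' : F} {x : 𝕜}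
    {C : ℝ} (hu : HasDerivAt u u' x) (hv : HasDerivAt v v' x)
    (h : ∀ᶠ y in 𝓝 x, ‖u y - u x‖ ≤ C * ‖v y - v x‖) : ‖u'‖ ≤ C * ‖v'‖ := by
  refine le_of_tendsto_of_tendsto hu.tendsto_slope.norm (hv.tendsto_slope.norm.const_mul C) ?_
  filter_upwards [h.filter_mono nhdsWithin_le_nhds] with y hy
  calc ‖slope u x y‖ = ‖(y - x)⁻¹‖ * ‖u y - u x‖ := by rw [slope_def_module, norm_smul]
    _ ≤ ‖(y - x)⁻¹‖ * (C * ‖v y - v x‖) := by gcongr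
    _ = C * ‖slope v x y‖ := by rw [slope_def_module, norm_smul, mul_left_comm]

end Derivative

theorem abs_integral_norm_sub_integral_norm_le {α E : Type*} [MeasurableSpace α] {μ : Measure α}
    [NormedAddCommGroup E] {g h : α → E} (hg : Integrable g μ) (hh : Integrable h μ) :
    |(∫ x, ‖g x‖ ∂μ) - ∫ x, ‖h x‖ ∂μ| ≤ ∫ x, ‖g x - h x‖ ∂μ := by
  rw [← integral_sub hg.norm hh.norm]
  exact abs_integral_le_integral_abs.trans <| integral_mono (hg.norm.sub hh.norm).abs
    (hg.sub hh).norm fun x ↦ abs_norm_sub_norm_le (g x) (h x)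

section Exponential

variable {a b : ℝ}

theorem integrableOn_exp_neg_mul_Ioi (ha : 0 < a) :
    IntegrableOn (fun s ↦ Real.exp (-a * s)) (Ioi 0) :=
  integrableOn_exp_mul_Ioi (neg_lt_zero.mpr ha) 0

theorem integral_exp_neg_mul_Ioi (ha : 0 < a) : ∫ s in Ioi (0 : ℝ), Real.exp (-a * s) = a⁻¹ := by
  rw [integral_exp_mul_Ioi (neg_lt_zero.mpr ha), mul_zero, Real.exp_zero, neg_div_neg_eq, one_div]

theorem integral_abs_exp_neg_mul_sub_exp_neg_mul_Ioi (ha : 0 < a) (hb : 0 < b) :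
    ∫ s in Ioi (0 : ℝ), |Real.exp (-a * s) - Real.exp (-b * s)| = |a⁻¹ - b⁻¹| := by
  wlog hab : a ≤ b generalizing a b
  · simpa only [abs_sub_comm] using this hb ha (le_of_not_ge hab)
  have h_nonneg : ∀ s ∈ Ioi (0 : ℝ), 0 ≤ Real.exp (-a * s) - Real.exp (-b * s) := fun s hs ↦
    sub_nonneg.mpr <| Real.exp_le_exp.mpr <|
      mul_le_mul_of_nonneg_right (neg_le_neg hab) (le_of_lt hs)
  calc ∫ s in Ioi (0 : ℝ), |Real.exp (-a * s) - Real.exp (-b * s)|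
      = ∫ s in Ioi (0 : ℝ), (Real.exp (-a * s) - Real.exp (-b * s)) :=
        setIntegral_congr_fun measurableSet_Ioi fun s hs ↦ abs_of_nonneg (h_nonneg s hs)
    _ = a⁻¹ - b⁻¹ := by
        rw [integral_sub (integrableOn_exp_neg_mul_Ioi ha) (integrableOn_exp_neg_mul_Ioi hb),
          integral_exp_neg_mul_Ioi ha, integral_exp_neg_mul_Ioi hb]
    _ = |a⁻¹ - b⁻¹| := (abs_of_nonneg (sub_nonneg.mpr (inv_anti₀ ha hab))).symm

end Exponential

section Kernel

variable {ι E : Type*} [Fintype ι] [NormedAddCommGroup E] [NormedSpace ℝ E]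
  {ρ : ℝ → E} {c : ι → E} {r r' : ι → ℝ}

/-- The memory kernel `s ↦ ∑ i, e^{-r i s} c i` of a linear RNN with decay rates `r i` and
coefficients `c i`, which may be vectors (several output channels). -/
noncomputable def decayKernel (c : ι → E) (r : ι → ℝ) (s : ℝ) : E :=
  ∑ i, Real.exp (-(r i) * s) • c i

/-- The loss of a linear RNN with target memory function `ρ`: the `L¹` distance on `(0, ∞)`
between `ρ` and the memory kernel, as a function of the decay rates themselves. A
reparameterization `f` enters by taking `r i = f (w i)`. -/
noncomputable def kernelLoss (ρ : ℝ → E) (c : ι → E) (r : ι → ℝ) : ℝ :=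
  ∫ s in Ioi (0 : ℝ), ‖ρ s - decayKernel c r s‖

theorem integrableOn_decayKernel (hr : ∀ i, 0 < r i) : IntegrableOn (decayKernel c r) (Ioi 0) :=
  integrable_finsetSum _ fun i _ ↦ (integrableOn_exp_neg_mul_Ioi (hr i)).smul_const (c i)

theorem norm_decayKernel_sub_decayKernel_le (s : ℝ) :
    ‖decayKernel c r s - decayKernel c r' s‖ ≤
      ∑ i, ‖c i‖ * |Real.exp (-(r i) * s) - Real.exp (-(r' i) * s)| := by
  rw [decayKernel, decayKernel, ← Finset.sum_sub_distrib]
  refine norm_sum_le_of_le _ fun i _ ↦ ?_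
  rw [← sub_smul, norm_smul, Real.norm_eq_abs, mul_comm]

theorem integral_norm_decayKernel_sub_decayKernel_le (hr : ∀ i, 0 < r i) (hr' : ∀ i, 0 < r' i) :
    ∫ s in Ioi (0 : ℝ), ‖decayKernel c r s - decayKernel c r' s‖ ≤
      ∑ i, ‖c i‖ * |(r i)⁻¹ - (r' i)⁻¹| := by
  have h_int : ∀ i, IntegrableOn
      (fun s ↦ ‖c i‖ * |Real.exp (-(r i) * s) - Real.exp (-(r' i) * s)|) (Ioi 0) := fun i ↦
    ((integrableOn_exp_neg_mul_Ioi (hr i)).sub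
      (integrableOn_exp_neg_mul_Ioi (hr' i))).abs.const_mul _
  calc ∫ s in Ioi (0 : ℝ), ‖decayKernel c r s - decayKernel c r' s‖
      ≤ ∫ s in Ioi (0 : ℝ), ∑ i, ‖c i‖ * |Real.exp (-(r i) * s) - Real.exp (-(r' i) * s)| :=
        integral_mono ((integrableOn_decayKernel hr).sub (integrableOn_decayKernel hr')).norm
          (integrable_finsetSum _ fun i _ ↦ h_int i) norm_decayKernel_sub_decayKernel_le
    _ = ∑ i, ‖c i‖ * |(r i)⁻¹ - (r' i)⁻¹| := by
        simp_rw [integral_finsetSum _ fun i _ ↦ h_int i, integral_const_mul,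
          integral_abs_exp_neg_mul_sub_exp_neg_mul_Ioi (hr _) (hr' _)]

theorem abs_kernelLoss_sub_kernelLoss_le (hρ : IntegrableOn ρ (Ioi 0)) (hr : ∀ i, 0 < r i)
    (hr' : ∀ i, 0 < r' i) :
    |kernelLoss ρ c r - kernelLoss ρ c r'| ≤ ∑ i, ‖c i‖ * |(r i)⁻¹ - (r' i)⁻¹| :=
  calc |kernelLoss ρ c r - kernelLoss ρ c r'|
      ≤ ∫ s in Ioi (0 : ℝ), ‖(ρ s - decayKernel c r s) - (ρ s - decayKernel c r' s)‖ :=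
        abs_integral_norm_sub_integral_norm_le (hρ.sub (integrableOn_decayKernel hr))
          (hρ.sub (integrableOn_decayKernel hr'))
    _ = ∫ s in Ioi (0 : ℝ), ‖decayKernel c r s - decayKernel c r' s‖ := by
        simp only [sub_sub_sub_cancel_left, norm_sub_rev]
    _ ≤ ∑ i, ‖c i‖ * |(r i)⁻¹ - (r' i)⁻¹| := integral_norm_decayKernel_sub_decayKernel_le hr hr'

theorem abs_kernelLoss_update_sub_kernelLoss_le [DecidableEq ι] (hρ : IntegrableOn ρ (Ioi 0))
    (hr : ∀ i, 0 < r i) (j : ι) {t : ℝ} (ht : 0 < t) :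
    |kernelLoss ρ c (Function.update r j t) - kernelLoss ρ c r| ≤ ‖c j‖ * |t⁻¹ - (r j)⁻¹| := by
  have h_pos : ∀ i, 0 < Function.update r j t i :=
    (Function.forall_update_iff r fun _ z ↦ 0 < z).mpr ⟨ht, fun i _ ↦ hr i⟩
  refine (abs_kernelLoss_sub_kernelLoss_le hρ h_pos hr).trans_eq ?_
  rw [Fintype.sum_eq_single j fun i hi ↦ by simp [hi], Function.update_self]

theorem stmt12_general [DecidableEq ι] (hρ : IntegrableOn ρ (Ioi 0)) {f : ℝ → ℝ} {f' D : ℝ}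
    {w : ι → ℝ} {j : ι} (hf : ∀ i, 0 < f (w i)) (hf' : HasDerivAt f f' (w j))
    (hD : HasDerivAt (fun x ↦ kernelLoss ρ c fun i ↦ f (Function.update w j x i)) D (w j)) :
    |D| ≤ ‖c j‖ * |f'| / f (w j) ^ 2 := by
  have h_timescale : HasDerivAt (fun x ↦ (f x)⁻¹) (-f' / f (w j) ^ 2) (w j) :=
    hf'.fun_inv (hf j).ne'
  have h_rates : ∀ x, (fun i ↦ f (Function.update w j x i)) =
      Function.update (fun i ↦ f (w i)) j (f x) := Function.comp_update f w j
  simp only [h_rates] at hD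
  have h_bound : |D| ≤ ‖c j‖ * |-f' / f (w j) ^ 2| := by
    refine norm_hasDerivAt_le_of_norm_sub_le hD h_timescale ?_
    filter_upwards [hf'.continuousAt.eventually_const_lt (hf j)] with x hx
    simpa using abs_kernelLoss_update_sub_kernelLoss_le hρ hf j hx
  rwa [abs_div, abs_neg, abs_sq, ← mul_div_assoc] at h_bound

end Kernel

/-- Continuous-time gradient bound: for the `L¹` loss
`Loss(w) = ∫₀^∞ |ρ(s) − Σᵢ cᵢ e^{−f(wᵢ) s}| ds` with reparameterized decay rates `f > 0`, any
partial derivative with respect to `w_j` is bounded by `|c_j| |f'(w_j)| / f(w_j)²`. -/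
theorem stmt12 (ρ : ℝ → ℝ) (hρ : IntegrableOn ρ (Ioi 0))
    (m : ℕ) (hm : 1 ≤ m) (c : Fin m → ℝ)
    (f f' : ℝ → ℝ) (hf : ∀ v, 0 < f v) (hf' : ∀ v, HasDerivAt f (f' v) v)
    (w : Fin m → ℝ) (j : Fin m) (D : ℝ)
    (hD : HasDerivAt
      (fun x : ℝ =>
        ∫ s in Ioi (0:ℝ),
          |ρ s - ∑ i, c i * Real.exp (-(f ((Function.update w j x) i)) * s)|)
      D (w j)) :
    |D| ≤ |c j| * |f' (w j)| / (f (w j)) ^ 2 := by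
  exact stmt12_general hρ (fun i ↦ hf (w i)) (hf' (w j)) <| by
    simpa only [kernelLoss, decayKernel, smul_eq_mul, mul_comm, Real.norm_eq_abs] using hD
end

section
/- (Discrete-time gradient bound.) Let (ρ_k)_{k≥0} be an absolutely summable real sequence, let m ≥ 1, c ∈ ℝ^m, and let f : ℝ → ℝ be differentiable with 0 ≤ f(v) < 1 for all v. Define Loss(w) := Σ_{k=0}^∞ | ρ_k − Σ_{i=1}^m c_i f(w_i)^k | for w ∈ ℝ^m. Fix j and a point w at which the partial derivative ∂Loss/∂w_j exists. Then |∂Loss/∂w_j (w)| ≤ |c_j| · |f'(w_j)| / (1 − f(w_j))². -/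
/-!
Factor `a ^ k - b ^ k` as `a - b` times a two-variable geometric sum. Summed over `k`, the norms
are dominated by the Cauchy product of two geometric series, so
`∑ₖ ‖a ^ k - b ^ k‖ ≤ ‖a - b‖ / ((1 - ‖a‖) (1 - ‖b‖))` for `a`, `b` in the open unit ball. Taking
`a = f x` and `b = f (w j)`, this times `‖c j‖` bounds the increment of the loss, by the triangle
inequality in `ℓ¹`. Divide by `|x - w j|` and let `x` tend to `w j`.
-/

open Filter Finset Function Topology

section Powers

theorem hasSum_sum_range_pow_mul_pow {r s : ℝ} (hr₀ : 0 ≤ r) (hr₁ : r < 1) (hs₀ : 0 ≤ s)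
    (hs₁ : s < 1) :
    HasSum (fun n : ℕ => ∑ k ∈ range (n + 1), r ^ k * s ^ (n - k)) ((1 - r) * (1 - s))⁻¹ := by
  have hr := (summable_geometric_of_lt_one hr₀ hr₁).norm
  have hs := (summable_geometric_of_lt_one hs₀ hs₁).norm
  simpa only [tsum_geometric_of_lt_one hr₀ hr₁, tsum_geometric_of_lt_one hs₀ hs₁, mul_inv] using
    hasSum_sum_range_mul_of_summable_norm hr hs

variable {A : Type*} [NormedCommRing A] [NormOneClass A] {a b : A}

theorem norm_pow_succ_sub_pow_succ_le (a b : A) (n : ℕ) :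
    ‖a ^ (n + 1) - b ^ (n + 1)‖ ≤
      ‖a - b‖ * ∑ k ∈ range (n + 1), ‖a‖ ^ k * ‖b‖ ^ (n - k) := by
  calc ‖a ^ (n + 1) - b ^ (n + 1)‖
      = ‖(a - b) * ∑ k ∈ range (n + 1), a ^ k * b ^ (n - k)‖ := by
        rw [← (Commute.all a b).mul_geom_sum₂, Nat.add_sub_cancel]
    _ ≤ ‖a - b‖ * ‖∑ k ∈ range (n + 1), a ^ k * b ^ (n - k)‖ := norm_mul_le _ _
    _ ≤ ‖a - b‖ * ∑ k ∈ range (n + 1), ‖a‖ ^ k * ‖b‖ ^ (n - k) := by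
        gcongr
        refine norm_sum_le_of_le _ fun k _ => (norm_mul_le _ _).trans ?_
        gcongr <;> exact norm_pow_le _ _

theorem summable_norm_pow_sub_pow (ha : ‖a‖ < 1) (hb : ‖b‖ < 1) :
    Summable fun k : ℕ => ‖a ^ k - b ^ k‖ :=
  (summable_nat_add_iff 1).1 <| .of_nonneg_of_le (fun _ => norm_nonneg _)
    (norm_pow_succ_sub_pow_succ_le a b)
    ((hasSum_sum_range_pow_mul_pow (norm_nonneg a) ha (norm_nonneg b) hb).summable.mul_left _)

theorem tsum_norm_pow_sub_pow_le (ha : ‖a‖ < 1) (hb : ‖b‖ < 1) :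
    ∑' k : ℕ, ‖a ^ k - b ^ k‖ ≤ ‖a - b‖ / ((1 - ‖a‖) * (1 - ‖b‖)) := by
  have hpow := summable_norm_pow_sub_pow ha hb
  have hgeom :=
    (hasSum_sum_range_pow_mul_pow (norm_nonneg a) ha (norm_nonneg b) hb).mul_left ‖a - b‖
  rw [hpow.tsum_eq_zero_add, pow_zero, pow_zero, sub_self, norm_zero, zero_add, div_eq_mul_inv]
  exact hasSum_le (norm_pow_succ_sub_pow_succ_le a b)
    ((summable_nat_add_iff 1).2 hpow).hasSum hgeom

end Powers

theorem abs_tsum_norm_sub_tsum_norm_le {α E : Type*} [SeminormedAddCommGroup E] {u v : α → E}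
    (hu : Summable fun k => ‖u k‖) (hv : Summable fun k => ‖v k‖) :
    |∑' k, ‖u k‖ - ∑' k, ‖v k‖| ≤ ∑' k, ‖u k - v k‖ := by
  have huv : Summable fun k => ‖u k - v k‖ :=
    .of_nonneg_of_le (fun _ => norm_nonneg _) (fun _ => norm_sub_le _ _) (hu.add hv)
  rw [← hu.tsum_sub hv, ← Real.norm_eq_abs]
  exact tsum_of_norm_bounded huv.hasSum fun k => abs_norm_sub_norm_le (u k) (v k)

theorem norm_deriv_le_of_eventually_norm_sub_le {𝕜 E F : Type*} [NontriviallyNormedField 𝕜]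
    [NormedAddCommGroup E] [NormedSpace 𝕜 E] [NormedAddCommGroup F] [NormedSpace 𝕜 F]
    {g : 𝕜 → E} {f : 𝕜 → F} {g' : E} {f' : F} {C : 𝕜 → ℝ} {x : 𝕜}
    (hg : HasDerivAt g g' x) (hf : HasDerivAt f f' x) (hC : ContinuousAt C x)
    (hle : ∀ᶠ y in 𝓝 x, ‖g y - g x‖ ≤ C y * ‖f y - f x‖) :
    ‖g'‖ ≤ C x * ‖f'‖ := by
  have hg_slope : Tendsto (fun y => ‖slope g x y‖) (𝓝[≠] x) (𝓝 ‖g'‖) :=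
    (hasDerivAt_iff_tendsto_slope.1 hg).norm
  have hf_slope : Tendsto (fun y => C y * ‖slope f x y‖) (𝓝[≠] x) (𝓝 (C x * ‖f'‖)) :=
    (hC.mono_left nhdsWithin_le_nhds).mul (hasDerivAt_iff_tendsto_slope.1 hf).norm
  refine le_of_tendsto_of_tendsto hg_slope hf_slope ?_
  filter_upwards [hle.filter_mono nhdsWithin_le_nhds] with y hy
  calc ‖slope g x y‖ = ‖(y - x)⁻¹‖ * ‖g y - g x‖ := norm_smul _ _
    _ ≤ ‖(y - x)⁻¹‖ * (C y * ‖f y - f x‖) := by gcongr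
    _ = C y * ‖slope f x y‖ := by rw [slope, vsub_eq_sub, norm_smul, mul_left_comm]

section Loss

variable {ι A : Type*} [Fintype ι] [NormedCommRing A]

/-- The memory kernel `k ↦ ∑ i, c i * a i ^ k` of a linear recurrent network with diagonal
recurrent weights `a` and read-out coefficients `c`; a reparameterization `f` enters as
`a = f ∘ w`. -/
def memoryKernel (c a : ι → A) (k : ℕ) : A :=
  ∑ i, c i * a i ^ k

/-- The `ℓ¹` distance between a target memory sequence `ρ` and the memory kernel of `c` and `a`.
It is `0` by convention when the distance is infinite. -/
noncomputable def memoryLoss (ρ : ℕ → A) (c a : ι → A) : ℝ :=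
  ∑' k, ‖ρ k - memoryKernel c a k‖

theorem norm_memoryKernel_sub_le (c a b : ι → A) (k : ℕ) :
    ‖memoryKernel c a k - memoryKernel c b k‖ ≤ ∑ i, ‖c i‖ * ‖a i ^ k - b i ^ k‖ := by
  simp only [memoryKernel, ← sum_sub_distrib, ← mul_sub]
  exact norm_sum_le_of_le _ fun i _ => norm_mul_le _ _

variable [NormOneClass A] {ρ : ℕ → A} {a b : ι → A}

theorem summable_norm_memoryKernel (c : ι → A) (ha : ∀ i, ‖a i‖ < 1) :
    Summable fun k => ‖memoryKernel c a k‖ := by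
  have hgeom : Summable fun k : ℕ => ∑ i, ‖c i‖ * ‖a i‖ ^ k :=
    summable_sum fun i _ => (summable_geometric_of_lt_one (norm_nonneg _) (ha i)).mul_left _
  refine .of_nonneg_of_le (fun _ => norm_nonneg _) (fun k => ?_) hgeom
  refine norm_sum_le_of_le _ fun i _ => (norm_mul_le _ _).trans ?_
  gcongr
  exact norm_pow_le _ _

theorem summable_norm_sub_memoryKernel (hρ : Summable fun k => ‖ρ k‖) (c : ι → A)
    (ha : ∀ i, ‖a i‖ < 1) : Summable fun k => ‖ρ k - memoryKernel c a k‖ :=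
  .of_nonneg_of_le (fun _ => norm_nonneg _) (fun _ => norm_sub_le _ _)
    (hρ.add (summable_norm_memoryKernel c ha))

theorem abs_memoryLoss_sub_le (hρ : Summable fun k => ‖ρ k‖) (c : ι → A)
    (ha : ∀ i, ‖a i‖ < 1) (hb : ∀ i, ‖b i‖ < 1) :
    |memoryLoss ρ c a - memoryLoss ρ c b| ≤
      ∑ i, ‖c i‖ * (‖a i - b i‖ / ((1 - ‖a i‖) * (1 - ‖b i‖))) := by
  have hpow : ∀ i, Summable fun k : ℕ => ‖c i‖ * ‖a i ^ k - b i ^ k‖ := fun i =>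
    (summable_norm_pow_sub_pow (ha i) (hb i)).mul_left _
  have hsum : Summable fun k : ℕ => ∑ i, ‖c i‖ * ‖a i ^ k - b i ^ k‖ :=
    summable_sum fun i _ => hpow i
  calc |memoryLoss ρ c a - memoryLoss ρ c b|
      ≤ ∑' k, ‖(ρ k - memoryKernel c a k) - (ρ k - memoryKernel c b k)‖ :=
        abs_tsum_norm_sub_tsum_norm_le (summable_norm_sub_memoryKernel hρ c ha)
          (summable_norm_sub_memoryKernel hρ c hb)
    _ ≤ ∑' k, ∑ i, ‖c i‖ * ‖a i ^ k - b i ^ k‖ := by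
        simp only [sub_sub_sub_cancel_left, norm_sub_rev (memoryKernel c b _)]
        exact (hsum.of_nonneg_of_le (fun _ => norm_nonneg _)
          (norm_memoryKernel_sub_le c a b)).tsum_le_tsum (norm_memoryKernel_sub_le c a b) hsum
    _ = ∑ i, ‖c i‖ * ∑' k, ‖a i ^ k - b i ^ k‖ := by
        rw [Summable.tsum_finsetSum fun i _ => hpow i]
        simp only [tsum_mul_left]
    _ ≤ ∑ i, ‖c i‖ * (‖a i - b i‖ / ((1 - ‖a i‖) * (1 - ‖b i‖))) := by
        gcongr with i
        exact tsum_norm_pow_sub_pow_le (ha i) (hb i)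

theorem abs_memoryLoss_update_sub_le [DecidableEq ι] (hρ : Summable fun k => ‖ρ k‖) (c : ι → A)
    (ha : ∀ i, ‖a i‖ < 1) {j : ι} {z : A} (hz : ‖z‖ < 1) :
    |memoryLoss ρ c (update a j z) - memoryLoss ρ c a| ≤
      ‖c j‖ / ((1 - ‖z‖) * (1 - ‖a j‖)) * ‖z - a j‖ := by
  have hupdate : ∀ i, ‖update a j z i‖ < 1 :=
    (forall_update_iff a fun _ y => ‖y‖ < 1).2 ⟨hz, fun i _ => ha i⟩
  refine (abs_memoryLoss_sub_le hρ c hupdate ha).trans_eq ?_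
  rw [Fintype.sum_eq_single j fun i hi => by simp [update_of_ne hi], update_self]
  ring

theorem stmt13_general [NormedSpace ℝ A] [DecidableEq ι] (hρ : Summable fun k => ‖ρ k‖)
    (c : ι → A) {f : ℝ → A} {f' : A} {w : ι → ℝ} {j : ι} {D : ℝ} (hf : ∀ i, ‖f (w i)‖ < 1)
    (hf' : HasDerivAt f f' (w j))
    (hD : HasDerivAt (fun x => memoryLoss ρ c fun i => f (update w j x i)) D (w j)) :
    |D| ≤ ‖c j‖ * ‖f'‖ / (1 - ‖f (w j)‖) ^ 2 := by
  have hcont : ContinuousAt (fun x => ‖f x‖) (w j) := hf'.continuousAt.norm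
  have hne : 1 - ‖f (w j)‖ ≠ 0 := (sub_pos.2 (hf j)).ne'
  have hC : ContinuousAt (fun x => ‖c j‖ / ((1 - ‖f x‖) * (1 - ‖f (w j)‖))) (w j) :=
    continuousAt_const.div ((continuousAt_const.sub hcont).mul continuousAt_const)
      (mul_ne_zero hne hne)
  have hupdate : ∀ x, (fun i => f (update w j x i)) = update (f ∘ w) j (f x) := comp_update f w j
  have hself : update (f ∘ w) j (f (w j)) = f ∘ w := update_eq_self j (f ∘ w)
  simp only [hupdate] at hD
  have hbound := norm_deriv_le_of_eventually_norm_sub_le hD hf' hC <| by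
    filter_upwards [hcont.eventually_lt_const (hf j)] with x hx
    rw [hself]
    exact abs_memoryLoss_update_sub_le hρ c hf hx
  rwa [Real.norm_eq_abs, div_mul_eq_mul_div, ← sq] at hbound

end Loss

/-- Discrete-time gradient bound: for the `ℓ¹` loss
`Loss(w) = Σ_{k≥0} |ρ_k − Σᵢ cᵢ f(wᵢ)^k|` with reparameterized weights `0 ≤ f < 1`, any
partial derivative with respect to `w_j` is bounded by `|c_j| |f'(w_j)| / (1 − f(w_j))²`. -/
theorem stmt13 (ρ : ℕ → ℝ) (hρ : Summable (fun k => |ρ k|))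
    (m : ℕ) (hm : 1 ≤ m) (c : Fin m → ℝ)
    (f f' : ℝ → ℝ) (hf0 : ∀ v, 0 ≤ f v) (hf1 : ∀ v, f v < 1)
    (hf' : ∀ v, HasDerivAt f (f' v) v)
    (w : Fin m → ℝ) (j : Fin m) (D : ℝ)
    (hD : HasDerivAt
      (fun x : ℝ =>
        ∑' k : ℕ, |ρ k - ∑ i, c i * (f ((Function.update w j x) i)) ^ k|)
      D (w j)) :
    |D| ≤ |c j| * |f' (w j)| / (1 - f (w j)) ^ 2 := by
  have hnorm : ∀ v, ‖f v‖ = f v := fun v => Real.norm_of_nonneg (hf0 v)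
  simpa only [hnorm, Real.norm_eq_abs] using
    stmt13_general (ρ := ρ) hρ c (fun i => (hnorm (w i)).trans_lt (hf1 (w i))) (hf' (w j)) hD
end

section
/- (Characterization of the 'best' reparameterization.) Let a > 0 and let f : ℝ → ℝ be differentiable with f(w) < 0 for all w, satisfying the ODE f'(w) = a · w · f(w)² for all w ∈ ℝ (equivalently, f'(w)/f(w)² = a w, i.e. the gradient-over-weight ratio G_f(w)/|w| is constant). Then, with b := −1/f(0) > 0, f is given by f(w) = −1 / ( (a/2) w² + b ) for all w ∈ ℝ. -/
/- Separation of variables: along a solution of `f' = g' f²` the derivative of `1 / f` is `-g'`, so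
`1 / f + g` is a first integral. Here `g w = (a / 2) w²`, and the value at `w = 0` is `1 / f 0`. -/

theorem hasDerivAt_inv_of_hasDerivAt_mul_sq {𝕜 : Type*} [NontriviallyNormedField 𝕜]
    {f : 𝕜 → 𝕜} {c x : 𝕜} (hx : f x ≠ 0) (hf : HasDerivAt f (c * f x ^ 2) x) :
    HasDerivAt (fun y ↦ (f y)⁻¹) (-c) x :=
  (hf.fun_inv hx).congr_deriv (by field_simp)

theorem hasDerivAt_half_mul_sq {𝕜 : Type*} [NontriviallyNormedField 𝕜] [NeZero (2 : 𝕜)] (a x : 𝕜) :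
    HasDerivAt (fun y ↦ a / 2 * y ^ 2) (a * x) x :=
  ((hasDerivAt_pow 2 x).const_mul (a / 2)).congr_deriv (by
    rw [Nat.cast_ofNat, ← mul_assoc, div_mul_cancel₀ a two_ne_zero, pow_one])

section RCLike

variable {𝕜 : Type*} [RCLike 𝕜] {s : Set 𝕜} {f : 𝕜 → 𝕜}

theorem inv_add_eq_of_hasDerivAt_mul_sq {g g' : 𝕜 → 𝕜} (hs : IsOpen s) (hs' : IsPreconnected s)
    (hf₀ : ∀ x ∈ s, f x ≠ 0) (hf : ∀ x ∈ s, HasDerivAt f (g' x * f x ^ 2) x)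
    (hg : ∀ x ∈ s, HasDerivAt g (g' x) x) {x y : 𝕜} (hx : x ∈ s) (hy : y ∈ s) :
    (f x)⁻¹ + g x = (f y)⁻¹ + g y := by
  have hderiv : ∀ z ∈ s, HasDerivAt (fun z ↦ (f z)⁻¹ + g z) 0 z := fun z hz ↦
    ((hasDerivAt_inv_of_hasDerivAt_mul_sq (hf₀ z hz) (hf z hz)).fun_add (hg z hz)).congr_deriv
      (neg_add_cancel _)
  exact hs.is_const_of_deriv_eq_zero hs'
    (fun z hz ↦ (hderiv z hz).differentiableAt.differentiableWithinAt)
    (fun z hz ↦ (hderiv z hz).deriv) hx hy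

theorem stmt16_general {a : 𝕜} (hs : IsOpen s) (hs' : IsPreconnected s) (h0 : 0 ∈ s)
    (hf₀ : ∀ w ∈ s, f w ≠ 0) (hODE : ∀ w ∈ s, HasDerivAt f (a * w * f w ^ 2) w)
    {w : 𝕜} (hw : w ∈ s) :
    f w = -1 / (a / 2 * w ^ 2 + -(1 / f 0)) := by
  have first_integral : (f w)⁻¹ + a / 2 * w ^ 2 = (f 0)⁻¹ + a / 2 * 0 ^ 2 :=
    inv_add_eq_of_hasDerivAt_mul_sq hs hs' hf₀ hODE (fun x _ ↦ hasDerivAt_half_mul_sq a x) hw h0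
  have denominator : a / 2 * w ^ 2 + -(1 / f 0) = -(f w)⁻¹ := by
    linear_combination first_integral
  rw [denominator, neg_div_neg_eq, one_div, inv_inv]

end RCLike

/-- Characterization of the "best" reparameterization: if `f < 0` is differentiable and
satisfies `f'(w) = a w f(w)²` for all `w` (constant gradient-over-weight ratio), then with
`b := −1/f(0) > 0` one has `f(w) = −1/((a/2) w² + b)` for all `w`. -/
theorem stmt16 (a : ℝ) (ha : 0 < a) (f : ℝ → ℝ)
    (hneg : ∀ w, f w < 0)
    (hODE : ∀ w, HasDerivAt f (a * w * (f w) ^ 2) w) :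
    0 < -(1 / f 0) ∧ ∀ w, f w = -1 / (a / 2 * w ^ 2 + -(1 / f 0)) :=
  ⟨neg_pos.mpr (one_div_neg.mpr (hneg 0)), fun w ↦
    stmt16_general isOpen_univ isPreconnected_univ (Set.mem_univ 0) (fun x _ ↦ (hneg x).ne)
      (fun x _ ↦ hODE x) (Set.mem_univ w)⟩
end

section
/- (Pointwise continuity of model outputs.) In the setting of the Grönwall dependence estimate, let Λ ∈ ℝ^{m×m}, U ∈ ℝ^{m×d}, b, c ∈ ℝ^m, let σ : ℝ^m → ℝ^m be L-Lipschitz with respect to |·|_∞, and let x, x_k : [0, ∞) → ℝ^d (k ∈ ℕ) be continuous and uniformly bounded with lim_{k→∞} sup_{t} |x_k(t) − x(t)|_∞ = 0. Let h, h_k solve h'(t) = σ(Λ h(t) + U x(t) + b) and h_k'(t) = σ(Λ h_k(t) + U x_k(t) + b) with h(0) = h_k(0) = 0, and define outputs y(t) = cᵀ h(t), y_k(t) = cᵀ h_k(t). Then for every t ≥ 0, lim_{k→∞} |h_k(t) − h(t)|_∞ = 0 and lim_{k→∞} | y_k'(t) − y'(t) | = 0. -/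
open Filter

/-!
Grönwall's inequality compares an exact solution of an ODE with an approximate one. The limit state
`h` solves the `k`-th system up to the error caused by replacing the input `x_k` with `x`, and this
error is uniformly small on `[0, T]` because the vector field is uniformly continuous in the input.
Hence `h_k → h` uniformly on `[0, T]`. The output derivative is a uniformly continuous function of
the current state and input, so it converges too, although derivatives of uniformly convergent
functions in general do not.
-/

open Set Topology

theorem gronwallBound_mul (c δ K ε x : ℝ) :
    gronwallBound (c * δ) K (c * ε) x = c * gronwallBound δ K ε x := by
  unfold gronwallBound
  split_ifs <;> ring

theorem exists_pos_gronwallBound_lt (K x : ℝ) {ε : ℝ} (hε : 0 < ε) :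
    ∃ η > 0, gronwallBound η K η x < ε := by
  obtain ⟨η, hη, hlt⟩ := exists_pos_mul_lt hε (gronwallBound 1 K 1 x)
  refine ⟨η, hη, ?_⟩
  calc gronwallBound η K η x = η * gronwallBound 1 K 1 x := by
        simpa only [mul_one] using gronwallBound_mul η 1 K 1 x
    _ = gronwallBound 1 K 1 x * η := mul_comm _ _
    _ < ε := hlt

theorem tendstoUniformlyOn_Icc_of_trajectories_ODE {ι E : Type*} [NormedAddCommGroup E]
    [NormedSpace ℝ E] {l : Filter ι} {K : NNReal} {a b : ℝ} {v : ι → ℝ → E → E}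
    {f f' : ℝ → E} {g : ι → ℝ → E} (hv : ∀ i t, LipschitzWith K (v i t))
    (hf : ContinuousOn f (Icc a b))
    (hf' : ∀ t ∈ Ico a b, HasDerivWithinAt f (f' t) (Ici t) t)
    (hg : ∀ i, ContinuousOn (g i) (Icc a b))
    (hg' : ∀ i, ∀ t ∈ Ico a b, HasDerivWithinAt (g i) (v i t (g i t)) (Ici t) t)
    (hvf : TendstoUniformlyOn (fun i t => v i t (f t)) f' l (Ico a b))
    (ha : Tendsto (fun i => g i a) l (𝓝 (f a))) :
    TendstoUniformlyOn g f l (Icc a b) := by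
  rw [Metric.tendstoUniformlyOn_iff] at hvf ⊢
  intro ε hε
  obtain ⟨η, hη, hηε⟩ := exists_pos_gronwallBound_lt K (b - a) hε
  filter_upwards [hvf η hη, Metric.tendsto_nhds.mp ha η hη] with i hi hia t ht
  calc dist (f t) (g i t) ≤ gronwallBound η K (η + 0) (t - a) :=
        dist_le_of_approx_trajectories_ODE (hv i) hf hf' (fun s hs => (hi s hs).le) (hg i) (hg' i)
          (fun s _ => (dist_self _).le) (dist_comm (f a) (g i a) ▸ hia.le) t ht
    _ = gronwallBound η K η (t - a) := by rw [add_zero]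
    _ ≤ gronwallBound η K η (b - a) :=
        gronwallBound_mono hη.le hη.le K.coe_nonneg (sub_le_sub_right ht.2 a)
    _ < ε := hηε

theorem tendstoUniformly_of_forall_exists_norm_sub_le {α E : Type*} [SeminormedAddCommGroup E]
    {F : ℕ → α → E} {f : α → E}
    (hF : ∀ ε > (0 : ℝ), ∃ N, ∀ n ≥ N, ∀ a, ‖F n a - f a‖ ≤ ε) :
    TendstoUniformly F f atTop := by
  rw [Metric.tendstoUniformly_iff]
  intro ε hε
  obtain ⟨N, hN⟩ := hF (ε / 2) (half_pos hε)
  filter_upwards [eventually_ge_atTop N] with n hn a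
  rw [dist_comm, dist_eq_norm]
  exact (hN n hn a).trans_lt (half_lt_self hε)

section RecurrentModel

variable {ι E F P G : Type*} [NormedAddCommGroup E] [NormedSpace ℝ E]
  [NormedAddCommGroup F] [NormedSpace ℝ F] [NormedAddCommGroup P] [NormedSpace ℝ P]
  [NormedAddCommGroup G] [NormedSpace ℝ G]

/-- The vector field `p ↦ σ (A p + B u + b)` driving the hidden state `p` of a continuous-time
recurrent model with input `u`. The pre-activation space `P` may differ from the state space. -/
def recurrentField (A : E →L[ℝ] P) (B : F →L[ℝ] P) (b : P) (σ : P → E) (u : F) (p : E) : E :=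
  σ (A p + B u + b)

variable {A : E →L[ℝ] P} {B : F →L[ℝ] P} {b : P} {C : E →L[ℝ] G} {L : NNReal} {σ : P → E}
  {l : Filter ι}

theorem lipschitzWith_recurrentField (hσ : LipschitzWith L σ) (u : F) :
    LipschitzWith (L * ‖A‖₊) (recurrentField A B b σ u) := by
  have hpre : LipschitzWith ‖A‖₊ fun p => A p + B u + b := by
    simpa only [add_zero, add_assoc] using A.lipschitz.add (LipschitzWith.const (B u + b))
  exact hσ.comp hpre

theorem tendstoUniformlyOn_recurrentField {α : Type*} {s : Set α} (hσ : UniformContinuous σ)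
    {u : α → F} {p : α → E} {uk : ι → α → F} {pk : ι → α → E}
    (hu : TendstoUniformlyOn uk u l s) (hp : TendstoUniformlyOn pk p l s) :
    TendstoUniformlyOn (fun k a => recurrentField A B b σ (uk k a) (pk k a))
      (fun a => recurrentField A B b σ (u a) (p a)) l s := by
  have hpre : UniformContinuous fun z : E × F => A z.1 + B z.2 + b :=
    ((A.uniformContinuous.comp uniformContinuous_fst).add
      (B.uniformContinuous.comp uniformContinuous_snd)).add uniformContinuous_const
  have hz : TendstoUniformlyOn (fun k a => (pk k a, uk k a)) (fun a => (p a, u a)) l s :=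
    fun V hV => (hp.prodMk hu V hV).diag_of_prod
  exact (hσ.comp hpre).comp_tendstoUniformlyOn hz

theorem clm_apply_eq_of_hasDerivWithinAt_comp {f : ℝ → E} {f' : E} {g' : G} {s : Set ℝ} {t : ℝ}
    (hs : UniqueDiffWithinAt ℝ s t) (hf : HasDerivWithinAt f f' s t)
    (hg : HasDerivWithinAt (C ∘ f) g' s t) : C f' = g' :=
  hs.eq_deriv _ (C.hasFDerivAt.comp_hasDerivWithinAt t hf) hg

theorem tendstoUniformlyOn_recurrent_state (hσ : LipschitzWith L σ) {T : ℝ}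
    {x : ℝ → F} {xk : ι → ℝ → F} (hx : TendstoUniformlyOn xk x l (Icc 0 T))
    {h : ℝ → E} {hk : ι → ℝ → E}
    (hode : ∀ t ≥ 0, HasDerivWithinAt h (recurrentField A B b σ (x t) (h t)) (Ici 0) t)
    (hodek : ∀ k, ∀ t ≥ 0,
      HasDerivWithinAt (hk k) (recurrentField A B b σ (xk k t) (hk k t)) (Ici 0) t)
    (hinit : Tendsto (fun k => hk k 0) l (𝓝 (h 0))) :
    TendstoUniformlyOn hk h l (Icc 0 T) := by
  have hconst : TendstoUniformlyOn (fun _ => h) h l (Icc 0 T) :=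
    fun _ hV => .of_forall fun _ _ _ => refl_mem_uniformity hV
  have hfield : TendstoUniformlyOn (fun k t => recurrentField A B b σ (xk k t) (h t))
      (fun t => recurrentField A B b σ (x t) (h t)) l (Icc 0 T) :=
    tendstoUniformlyOn_recurrentField hσ.uniformContinuous hx hconst
  exact tendstoUniformlyOn_Icc_of_trajectories_ODE
    (fun k t => lipschitzWith_recurrentField hσ (xk k t))
    (fun t ht => (hode t ht.1).continuousWithinAt.mono Icc_subset_Ici_self)
    (fun t ht => (hode t ht.1).mono (Ici_subset_Ici.mpr ht.1))
    (fun k t ht => (hodek k t ht.1).continuousWithinAt.mono Icc_subset_Ici_self)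
    (fun k t ht => (hodek k t ht.1).mono (Ici_subset_Ici.mpr ht.1))
    (hfield.mono Ico_subset_Icc_self) hinit

theorem stmt18_general (hσ : LipschitzWith L σ) {T : ℝ}
    {x : ℝ → F} {xk : ι → ℝ → F} (hx : TendstoUniformlyOn xk x l (Icc 0 T))
    {h : ℝ → E} {hk : ι → ℝ → E}
    (hode : ∀ t ≥ 0, HasDerivWithinAt h (recurrentField A B b σ (x t) (h t)) (Ici 0) t)
    (hodek : ∀ k, ∀ t ≥ 0,
      HasDerivWithinAt (hk k) (recurrentField A B b σ (xk k t) (hk k t)) (Ici 0) t)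
    (hinit : Tendsto (fun k => hk k 0) l (𝓝 (h 0)))
    {y' : ℝ → G} {yk' : ι → ℝ → G}
    (hy' : ∀ t ≥ 0, HasDerivWithinAt (C ∘ h) (y' t) (Ici 0) t)
    (hyk' : ∀ k, ∀ t ≥ 0, HasDerivWithinAt (C ∘ hk k) (yk' k t) (Ici 0) t) :
    TendstoUniformlyOn hk h l (Icc 0 T) ∧ TendstoUniformlyOn yk' y' l (Icc 0 T) := by
  have hstate := tendstoUniformlyOn_recurrent_state hσ hx hode hodek hinit
  have houtput : TendstoUniformlyOn (fun k t => C (recurrentField A B b σ (xk k t) (hk k t)))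
      (fun t => C (recurrentField A B b σ (x t) (h t))) l (Icc 0 T) :=
    C.uniformContinuous.comp_tendstoUniformlyOn
      (tendstoUniformlyOn_recurrentField hσ.uniformContinuous hx hstate)
  have hderiv : EqOn (fun t => C (recurrentField A B b σ (x t) (h t))) y' (Icc 0 T) :=
    fun t ht => clm_apply_eq_of_hasDerivWithinAt_comp (uniqueDiffOn_Ici 0 t ht.1)
      (hode t ht.1) (hy' t ht.1)
  have hderivk (k : ι) :
      EqOn (fun t => C (recurrentField A B b σ (xk k t) (hk k t))) (yk' k) (Icc 0 T) :=
    fun t ht => clm_apply_eq_of_hasDerivWithinAt_comp (uniqueDiffOn_Ici 0 t ht.1)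
      (hodek k t ht.1) (hyk' k t ht.1)
  exact ⟨hstate, (houtput.congr (.of_forall hderivk)).congr_right hderiv⟩

end RecurrentModel

/-- Pointwise continuity of model outputs: if the inputs `x_k` converge to `x` uniformly and
are uniformly bounded, then the hidden states `h_k(t)` converge to `h(t)` and the derivatives
of the scalar outputs `y_k(t) = cᵀ h_k(t)` converge to that of `y(t) = cᵀ h(t)`, for every
`t ≥ 0`. -/
theorem stmt18 (m d : ℕ)
    (Λ : Matrix (Fin m) (Fin m) ℝ) (U : Matrix (Fin m) (Fin d) ℝ)
    (b c : Fin m → ℝ) (L : NNReal)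
    (σ : (Fin m → ℝ) → Fin m → ℝ) (hσ : LipschitzWith L σ)
    (x : ℝ → Fin d → ℝ) (xk : ℕ → ℝ → Fin d → ℝ)
    (hx : Continuous x) (hxk : ∀ k, Continuous (xk k))
    (hbdd : ∃ M, (∀ t, ‖x t‖ ≤ M) ∧ ∀ k t, ‖xk k t‖ ≤ M)
    (hconv : ∀ ε > (0:ℝ), ∃ K : ℕ, ∀ k ≥ K, ∀ t : ℝ, ‖xk k t - x t‖ ≤ ε)
    (h : ℝ → Fin m → ℝ) (hk : ℕ → ℝ → Fin m → ℝ)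
    (hode : ∀ t, HasDerivAt h (σ (Λ.mulVec (h t) + U.mulVec (x t) + b)) t)
    (hodek : ∀ k t, HasDerivAt (hk k) (σ (Λ.mulVec (hk k t) + U.mulVec (xk k t) + b)) t)
    (hinit : h 0 = 0) (hinitk : ∀ k, hk k 0 = 0)
    (y : ℝ → ℝ) (yk : ℕ → ℝ → ℝ)
    (hy : ∀ t, y t = ∑ i, c i * h t i) (hyk : ∀ k t, yk k t = ∑ i, c i * hk k t i)
    (y' : ℝ → ℝ) (yk' : ℕ → ℝ → ℝ)
    (hy' : ∀ t, HasDerivAt y (y' t) t) (hyk' : ∀ k t, HasDerivAt (yk k) (yk' k t) t) :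
    ∀ t ≥ (0:ℝ),
      Tendsto (fun k => ‖hk k t - h t‖) atTop (nhds 0) ∧
      Tendsto (fun k => |yk' k t - y' t|) atTop (nhds 0) := by
  intro t ht
  obtain rfl : y = _ := funext hy
  obtain rfl : yk = _ := funext₂ hyk
  have hinit' : Tendsto (fun k => hk k 0) atTop (nhds (h 0)) := by
    simp only [hinit, hinitk, tendsto_const_nhds]
  have ⟨hstate, houtput⟩ := stmt18_general
    (A := Λ.mulVecLin.toContinuousLinearMap) (B := U.mulVecLin.toContinuousLinearMap)
    (b := b) (C := (dotProductBilin ℝ ℝ c).toContinuousLinearMap) (T := t) hσ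
    (tendstoUniformly_of_forall_exists_norm_sub_le hconv).tendstoUniformlyOn
    (fun s _ => (hode s).hasDerivWithinAt) (fun k s _ => (hodek k s).hasDerivWithinAt) hinit'
    (fun s _ => (hy' s).hasDerivWithinAt) (fun k s _ => (hyk' k s).hasDerivWithinAt)
  exact ⟨tendsto_iff_norm_sub_tendsto_zero.mp (hstate.tendsto_at ⟨ht, le_rfl⟩),
    tendsto_iff_norm_sub_tendsto_zero.mp (houtput.tendsto_at ⟨ht, le_rfl⟩)⟩
end

section
/- (Exponential memory decay of a diagonal SSM.) Let β₀ > 0, let Λ ∈ ℝ^{m×m} be diagonal with every diagonal entry λ_i ≤ −β₀, let U ∈ ℝ^{m×d}, b, c ∈ ℝ^m, and let σ : ℝ → ℝ be differentiable with |σ'(z)| ≤ L₀ for all z, applied coordinatewise. For a constant (Heaviside) input x₀ ∈ ℝ^d, let h : [0, ∞) → ℝ^m solve h'(t) = Λ h(t) + U x₀ + b with h(0) = 0, and set y(t) = cᵀ σ(h(t)). Then for all t ≥ 0, |y'(t)| ≤ |c|₂ · L₀ · |U x₀ + b|₂ · e^{−β₀ t}. -/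
/-!
The velocity `v = h'` solves `v' = Λ v`, and a matrix whose quadratic form is at most `-β₀ |x|²`
gives `(|v|²)' = 2 ⟪v, Λ v⟫ ≤ -2 β₀ |v|²`, so `|v(t)| ≤ |v(0)| e^{-β₀ t}` by Grönwall.
Since `y' = ∑ i, c i * σ'(h i) * v i`, the Cauchy–Schwarz inequality and `|σ'| ≤ L₀` transfer the
decay to `y'`.
-/

open Set WithLp
open scoped Matrix RealInnerProductSpace

section Gronwall

variable {E : Type*} [NormedAddCommGroup E] [InnerProductSpace ℝ E]

theorem norm_le_mul_exp_of_inner_deriv_right_le {v v' : ℝ → E} {K a b : ℝ}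
    (hv : ContinuousOn v (Icc a b))
    (hv' : ∀ t ∈ Ico a b, HasDerivWithinAt v (v' t) (Ici t) t)
    (bound : ∀ t ∈ Ico a b, ⟪v t, v' t⟫ ≤ K * ‖v t‖ ^ 2) :
    ∀ t ∈ Icc a b, ‖v t‖ ≤ ‖v a‖ * Real.exp (K * (t - a)) := by
  intro t ht
  have energy_le : ‖v t‖ ^ 2 ≤ gronwallBound (‖v a‖ ^ 2) (2 * K) 0 (t - a) :=
    le_gronwallBound_of_liminf_deriv_right_le (f := fun s => ‖v s‖ ^ 2) (hv.norm.pow 2)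
      (fun s hs _ hr => (hv' s hs).norm_sq.liminf_right_slope_le hr) le_rfl
      (fun s hs => by linarith [bound s hs]) t ht
  refine le_of_sq_le_sq ?_ (by positivity)
  calc ‖v t‖ ^ 2 ≤ ‖v a‖ ^ 2 * Real.exp (2 * K * (t - a)) := by
        rwa [gronwallBound_ε0] at energy_le
    _ = (‖v a‖ * Real.exp (K * (t - a))) ^ 2 := by
        rw [mul_pow, ← Real.exp_nat_mul, Nat.cast_ofNat, mul_assoc]

theorem norm_map_add_le_mul_exp_of_hasDerivWithinAt {A : E →L[ℝ] E} {K a : ℝ} {k : E} {h : ℝ → E}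
    (hA : ∀ x, ⟪x, A x⟫ ≤ K * ‖x‖ ^ 2)
    (hh : ∀ t ∈ Ici a, HasDerivWithinAt h (A (h t) + k) (Ici a) t) {t : ℝ} (ht : t ∈ Ici a) :
    ‖A (h t) + k‖ ≤ ‖A (h a) + k‖ * Real.exp (K * (t - a)) := by
  have velocity_deriv : ∀ s ∈ Ici a,
      HasDerivWithinAt (fun r => A (h r) + k) (A (A (h s) + k)) (Ici a) s :=
    fun s hs => (A.hasFDerivAt.comp_hasDerivWithinAt s (hh s hs)).add_const k
  exact norm_le_mul_exp_of_inner_deriv_right_le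
    (fun s hs => (velocity_deriv s hs.1).continuousWithinAt.mono Icc_subset_Ici_self)
    (fun s hs => (velocity_deriv s hs.1).mono (Ici_subset_Ici.2 hs.1))
    (fun _ _ => hA _) t ⟨ht, le_rfl⟩

end Gronwall

section Matrix

variable {ι : Type*} [Fintype ι]

theorem dotProduct_diagonal_mulVec_le [DecidableEq ι] {lam : ι → ℝ} {K : ℝ}
    (hlam : ∀ i, lam i ≤ K) (x : ι → ℝ) :
    x ⬝ᵥ Matrix.diagonal lam *ᵥ x ≤ K * (x ⬝ᵥ x) := by
  simp only [dotProduct, Matrix.mulVec_diagonal, Finset.mul_sum]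
  refine Finset.sum_le_sum fun i _ => ?_
  calc x i * (lam i * x i) = lam i * (x i * x i) := by ring
    _ ≤ K * (x i * x i) := mul_le_mul_of_nonneg_right (hlam i) (mul_self_nonneg _)

theorem norm_mulVec_add_le_mul_exp_of_hasDerivWithinAt {Λ : Matrix ι ι ℝ} {K a : ℝ} {k : ι → ℝ}
    {h : ℝ → ι → ℝ} (hΛ : ∀ x, x ⬝ᵥ Λ *ᵥ x ≤ K * (x ⬝ᵥ x))
    (hh : ∀ t ∈ Ici a, HasDerivWithinAt h (Λ *ᵥ h t + k) (Ici a) t) {t : ℝ} (ht : t ∈ Ici a) :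
    ‖toLp 2 (Λ *ᵥ h t + k)‖ ≤ ‖toLp 2 (Λ *ᵥ h a + k)‖ * Real.exp (K * (t - a)) := by
  classical
  refine norm_map_add_le_mul_exp_of_hasDerivWithinAt (A := Matrix.toEuclideanCLM (𝕜 := ℝ) Λ)
    (k := toLp 2 k) (h := fun s => toLp 2 (h s)) (fun x => ?_) (fun s hs => ?_) ht
  · rw [Matrix.inner_toEuclideanCLM, ← real_inner_self_eq_norm_sq]
    exact hΛ x
  · exact (PiLp.hasFDerivAt_toLp (𝕜 := ℝ) 2 (h s)).comp_hasDerivWithinAt s (hh s hs)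

end Matrix

section Readout

variable {ι : Type*} [Fintype ι]

theorem hasDerivWithinAt_sum_mul_comp {c v : ι → ℝ} {σ σ' : ℝ → ℝ} {h : ℝ → ι → ℝ} {S : Set ℝ}
    {t : ℝ} (hσ : ∀ i, HasDerivAt σ (σ' (h t i)) (h t i)) (hh : HasDerivWithinAt h v S t) :
    HasDerivWithinAt (fun s => ∑ i, c i * σ (h s i)) (∑ i, c i * (σ' (h t i) * v i)) S t :=
  HasDerivWithinAt.fun_sum fun i _ =>
    ((hσ i).comp_hasDerivWithinAt t (hasDerivWithinAt_pi.1 hh i)).const_mul (c i)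

theorem abs_sum_mul_mul_le {c s v : ι → ℝ} {L : ℝ} (hL : 0 ≤ L) (hs : ∀ i, |s i| ≤ L) :
    |∑ i, c i * (s i * v i)| ≤ ‖toLp 2 c‖ * L * ‖toLp 2 v‖ := by
  have cauchy_schwarz : ∑ i, |c i| * |v i| ≤ ‖toLp 2 c‖ * ‖toLp 2 v‖ := by
    simpa only [EuclideanSpace.norm_eq, Real.norm_eq_abs] using
      Real.sum_mul_le_sqrt_mul_sqrt Finset.univ (fun i => |c i|) (fun i => |v i|)
  calc |∑ i, c i * (s i * v i)| ≤ ∑ i, |c i * (s i * v i)| := Finset.abs_sum_le_sum_abs _ _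
    _ ≤ ∑ i, L * (|c i| * |v i|) := by
        refine Finset.sum_le_sum fun i _ => ?_
        rw [abs_mul, abs_mul, mul_left_comm]
        gcongr
        exact hs i
    _ = L * ∑ i, |c i| * |v i| := (Finset.mul_sum _ _ _).symm
    _ ≤ L * (‖toLp 2 c‖ * ‖toLp 2 v‖) := by gcongr
    _ = ‖toLp 2 c‖ * L * ‖toLp 2 v‖ := by ring

end Readout

theorem stmt19_general {ι : Type*} [Fintype ι] {Λ : Matrix ι ι ℝ} {β₀ L₀ : ℝ}
    (hΛ : ∀ x, x ⬝ᵥ Λ *ᵥ x ≤ -β₀ * (x ⬝ᵥ x)) {k c : ι → ℝ} {σ σ' : ℝ → ℝ}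
    (hσ : ∀ z, HasDerivAt σ (σ' z) z) (hσ' : ∀ z, |σ' z| ≤ L₀) {h : ℝ → ι → ℝ}
    (hode : ∀ t ∈ Ici 0, HasDerivWithinAt h (Λ *ᵥ h t + k) (Ici 0) t) {t y' : ℝ} (ht : 0 ≤ t)
    (hy' : HasDerivWithinAt (fun s => ∑ i, c i * σ (h s i)) y' (Ici 0) t) :
    |y'| ≤ ‖toLp 2 c‖ * L₀ * ‖toLp 2 (Λ *ᵥ h 0 + k)‖ * Real.exp (-β₀ * t) := by
  have hL₀ : 0 ≤ L₀ := (abs_nonneg _).trans (hσ' 0)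
  have y'_eq : y' = ∑ i, c i * (σ' (h t i) * (Λ *ᵥ h t + k) i) :=
    (uniqueDiffOn_Ici 0 t ht).eq_deriv _ hy'
      (hasDerivWithinAt_sum_mul_comp (fun i => hσ (h t i)) (hode t ht))
  have velocity_le : ‖toLp 2 (Λ *ᵥ h t + k)‖ ≤
      ‖toLp 2 (Λ *ᵥ h 0 + k)‖ * Real.exp (-β₀ * t) := by
    simpa only [sub_zero] using norm_mulVec_add_le_mul_exp_of_hasDerivWithinAt hΛ hode ht
  calc |y'| ≤ ‖toLp 2 c‖ * L₀ * ‖toLp 2 (Λ *ᵥ h t + k)‖ :=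
        y'_eq ▸ abs_sum_mul_mul_le hL₀ fun i => hσ' (h t i)
    _ ≤ ‖toLp 2 c‖ * L₀ * (‖toLp 2 (Λ *ᵥ h 0 + k)‖ * Real.exp (-β₀ * t)) := by gcongr
    _ = ‖toLp 2 c‖ * L₀ * ‖toLp 2 (Λ *ᵥ h 0 + k)‖ * Real.exp (-β₀ * t) := by ring

/-- Exponential memory decay of a diagonal SSM: if every diagonal entry of `Λ` is `≤ −β₀`,
the hidden state solves `h' = Λ h + U x₀ + b`, `h(0) = 0` (Heaviside input `x₀`), the scalar
activation `σ` has `|σ'| ≤ L₀`, and `y(t) = cᵀ σ(h(t))`, then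
`|y'(t)| ≤ |c|₂ L₀ |U x₀ + b|₂ e^{−β₀ t}` for all `t ≥ 0`. -/
theorem stmt19 (m d : ℕ) (β₀ : ℝ) (hβ₀ : 0 < β₀)
    (lam : Fin m → ℝ) (hlam : ∀ i, lam i ≤ -β₀)
    (U : Matrix (Fin m) (Fin d) ℝ) (b c : Fin m → ℝ)
    (σ σ' : ℝ → ℝ) (L₀ : ℝ)
    (hσ : ∀ z, HasDerivAt σ (σ' z) z) (hσ' : ∀ z, |σ' z| ≤ L₀)
    (x₀ : Fin d → ℝ) (h : ℝ → Fin m → ℝ)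
    (hode : ∀ t, HasDerivAt h ((Matrix.diagonal lam).mulVec (h t) + U.mulVec x₀ + b) t)
    (hinit : h 0 = 0)
    (y' : ℝ → ℝ)
    (hy' : ∀ t, HasDerivAt (fun s => ∑ i, c i * σ (h s i)) (y' t) t) :
    ∀ t ≥ (0:ℝ), |y' t| ≤
      Real.sqrt (∑ i, c i ^ 2) * L₀ * Real.sqrt (∑ i, ((U.mulVec x₀ + b) i) ^ 2) *
        Real.exp (-β₀ * t) := by
  simpa [EuclideanSpace.norm_eq, hinit] using fun t ht => stmt19_general (k := U *ᵥ x₀ + b)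
    (dotProduct_diagonal_mulVec_le hlam) hσ hσ'
    (fun s _ => add_assoc (_ *ᵥ h s) _ b ▸ (hode s).hasDerivWithinAt) ht (hy' t).hasDerivWithinAt
end
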